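/- For all μ, ν, λ ∈ 𝒫_p(𝒳_1 × 𝒫_p(𝒳_2)) the triangle inequality CW̄_p(μ, λ) ≤ CW̄_p(μ, ν) + CW̄_p(ν, λ) holds. -/

import Mathlib

open MeasureTheory ProbabilityTheory ENNReal Filter Topology

noncomputable section

namespace AWPaper

/-! ### Generic constructions -/

variable {α β : Type*}

/-- The set of couplings of two measures. -/
def Cpl [MeasurableSpace α] [MeasurableSpace β] (μ : Measure α) (ν : Measure β) :
    Set (Measure (α × β)) :=
  {π | π.map Prod.fst = μ ∧ π.map Prod.snd = ν}

/-- The `p`-Wasserstein distance (with values in `ℝ≥0∞`) associated to an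
`ℝ≥0∞`-valued distance function `d`. -/
def Wp [MeasurableSpace α] (p : ℝ) (d : α → α → ℝ≥0∞) (μ ν : Measure α) : ℝ≥0∞ :=
  ⨅ π ∈ Cpl μ ν, (∫⁻ z, d z.1 z.2 ^ p ∂π) ^ (1 / p)

/-- The topology generated by the open balls of an `ℝ≥0∞`-valued distance
function.  For a genuine metric this is the metric topology. -/
def ballTop (d : α → α → ℝ≥0∞) : TopologicalSpace α :=
  TopologicalSpace.generateFrom {s | ∃ x ε, 0 < ε ∧ s = {y | d x y < ε}}

/-- The product distance of two `ℝ≥0∞`-valued distances, `ℓ^p`-style. -/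
def prodDist (p : ℝ) (d₁ : α → α → ℝ≥0∞) (d₂ : β → β → ℝ≥0∞) :
    α × β → α × β → ℝ≥0∞ :=
  fun u v => (d₁ u.1 v.1 ^ p + d₂ u.2 v.2 ^ p) ^ (1 / p)

/-- Membership in the `p`-Wasserstein space: a probability measure with finite
`p`-th moment (w.r.t. the distance function `d`). -/
def MemPp [MeasurableSpace α] (p : ℝ) (d : α → α → ℝ≥0∞) (μ : Measure α) : Prop :=
  IsProbabilityMeasure μ ∧ ∃ x₀, ∫⁻ x, d x₀ x ^ p ∂μ ≠ ∞

/-- The weak topology on measures induced by integration of bounded continuous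
functions, for a given topology `τ` on the base space. -/
def weakTop [MeasurableSpace α] (τ : TopologicalSpace α) : TopologicalSpace (Measure α) :=
  TopologicalSpace.induced
    (fun μ => fun f : @BoundedContinuousFunction α ℝ τ _ => ∫ x, f x ∂μ)
    Pi.topologicalSpace

/-- The product topology built from two explicitly given topologies. -/
def prodTop (τ₁ : TopologicalSpace α) (τ₂ : TopologicalSpace β) : TopologicalSpace (α × β) :=
  TopologicalSpace.induced Prod.fst τ₁ ⊓ TopologicalSpace.induced Prod.snd τ₂

/-- An everywhere-defined version of the disintegration kernel: it agrees with
`Measure.condKernel` on finite measures. -/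
def condK [MeasurableSpace α] [MeasurableSpace β] [StandardBorelSpace β] [Nonempty β]
    (ρ : Measure (α × β)) : Kernel α β :=
  letI := Classical.dec (IsFiniteMeasure ρ)
  if h : IsFiniteMeasure ρ then @Measure.condKernel α β _ _ _ _ ρ h else 0

/-- The disintegration map `𝒫(A × B) → 𝒫(A × 𝒫(B))`. -/
def disint [MeasurableSpace α] [MeasurableSpace β] [StandardBorelSpace β] [Nonempty β]
    (μ : Measure (α × β)) : Measure (α × Measure β) :=
  μ.map (fun z => (z.1, condK μ z.1))

/-- The intensity ("und") map `𝒫(A × 𝒫(B)) → 𝒫(A × B)`. -/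
def und [MeasurableSpace α] [MeasurableSpace β] (μ : Measure (α × Measure β)) :
    Measure (α × β) :=
  μ.bind (fun z => (Measure.dirac z.1).prod z.2)

/-! ### Path spaces -/

variable {X : Type*} [MeasurableSpace X]

/-- The path-space distance `ρ̄((x_t),(y_t)) = (∑ ρ(x_t,y_t)^p)^{1/p}`. -/
def pathDist (p : ℝ) (d : X → X → ℝ≥0∞) {N : ℕ} :
    (Fin N → X) → (Fin N → X) → ℝ≥0∞ :=
  fun x y => (∑ t, d (x t) (y t) ^ p) ^ (1 / p)

/-- The first `t` coordinates of a path. -/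
def restr {N : ℕ} (t : ℕ) (h : t ≤ N) (x : Fin N → X) : Fin t → X :=
  fun s => x (Fin.castLE h s)

/-- The last `N - t` coordinates of a path. -/
def tailr {N : ℕ} (t : ℕ) (h : t ≤ N) (x : Fin N → X) : Fin (N - t) → X :=
  fun s => x ⟨t + s.1, by have := s.2; omega⟩

/-- A coupling `π` of two path measures is causal: for every `t` and Borel
`A ⊆ 𝒳^t`, `π((Y_1,…,Y_t) ∈ A | X) = π((Y_1,…,Y_t) ∈ A | X_1,…,X_t)` a.s. -/
def Causal {N : ℕ} (π : Measure ((Fin N → X) × (Fin N → X))) : Prop :=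
  ∀ (t : ℕ) (h : t ≤ N) (A : Set (Fin t → X)), MeasurableSet A →
    (π[fun z => A.indicator (fun _ => (1 : ℝ)) (restr t h z.2) |
        MeasurableSpace.comap Prod.fst inferInstance])
      =ᵐ[π]
    (π[fun z => A.indicator (fun _ => (1 : ℝ)) (restr t h z.2) |
        MeasurableSpace.comap (fun z => restr t h z.1) inferInstance])

/-- Bicausal couplings. -/
def Bicausal {N : ℕ} (π : Measure ((Fin N → X) × (Fin N → X))) : Prop :=
  Causal π ∧ Causal (π.map Prod.swap)

/-- The causal Wasserstein "distance" `CW_p`. -/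
def CW (p : ℝ) (d : X → X → ℝ≥0∞) {N : ℕ} (μ ν : Measure (Fin N → X)) : ℝ≥0∞ :=
  ⨅ π ∈ {π ∈ Cpl μ ν | Causal π}, (∫⁻ z, pathDist p d z.1 z.2 ^ p ∂π) ^ (1 / p)

/-- The symmetrized causal Wasserstein distance `SCW_p`. -/
def SCW (p : ℝ) (d : X → X → ℝ≥0∞) {N : ℕ} (μ ν : Measure (Fin N → X)) : ℝ≥0∞ :=
  max (CW p d μ ν) (CW p d ν μ)

/-- The adapted (nested, bicausal) Wasserstein distance `AW_p`. -/
def AW (p : ℝ) (d : X → X → ℝ≥0∞) {N : ℕ} (μ ν : Measure (Fin N → X)) : ℝ≥0∞ :=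
  ⨅ π ∈ {π ∈ Cpl μ ν | Bicausal π}, (∫⁻ z, pathDist p d z.1 z.2 ^ p ∂π) ^ (1 / p)

/-! ### Nested spaces (Pflug's nested distributions / Vershik's iterated spaces) -/

/-- A measurable space together with an `ℝ≥0∞`-valued distance. -/
structure QMS : Type 1 where
  carrier : Type
  inst : MeasurableSpace carrier
  dist : carrier → carrier → ℝ≥0∞

/-- The nested sequence of spaces: `nest X _ d p 0 = 𝒳` (this is `𝒳_N`), and
`nest X _ d p (k+1) = 𝒳 × 𝒫(nest X _ d p k)` with the nested distance
`D = (ρ^p + 𝒲_p^p)^{1/p}`.  Thus `𝒳_1` (for `N = k+1` time points) is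
`nest X _ d p k`. -/
def nest (X : Type) (mX : MeasurableSpace X) (d : X → X → ℝ≥0∞) (p : ℝ) : ℕ → QMS
  | 0 => ⟨X, mX, d⟩
  | (k + 1) =>
    let Q := nest X mX d p k
    ⟨X × @Measure Q.carrier Q.inst,
      @Prod.instMeasurableSpace _ _ mX (@Measure.instMeasurableSpace _ Q.inst),
      fun a b => (d a.1 b.1 ^ p + (@Wp _ Q.inst p Q.dist a.2 b.2) ^ p) ^ (1 / p)⟩

section NMapSec

variable (Y : Type) [mY : MeasurableSpace Y] [TopologicalSpace Y] [PolishSpace Y]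
  [BorelSpace Y] [Nonempty Y]

/-- The map `𝒩` sending the law of a process with `k+1` time steps to the
corresponding nested distribution, via iterated regular conditional laws. -/
def NMap (d : Y → Y → ℝ≥0∞) (p : ℝ) :
    ∀ k : ℕ, Measure (Fin (k + 1) → Y) →
      @Measure (nest Y mY d p k).carrier (nest Y mY d p k).inst
  | 0, μ =>
    letI : MeasurableSpace (nest Y mY d p 0).carrier := (nest Y mY d p 0).inst
    μ.map (fun x => x 0)
  | (k + 1), μ =>
    letI : MeasurableSpace (nest Y mY d p k).carrier := (nest Y mY d p k).inst
    letI : MeasurableSpace (nest Y mY d p (k + 1)).carrier := (nest Y mY d p (k + 1)).inst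
    (μ.map (fun x => x 0)).map
      (fun x₀ => (x₀, NMap d p k
        ((condK (μ.map (fun x => (x 0, fun s : Fin (k + 1) => x s.succ)))) x₀)))

end NMapSec

section PathStructures

variable {Y : Type*} [mY : MeasurableSpace Y]

/-- A process `L` is adapted: `L t` depends only on the first `t+1` coordinates. -/
def AdaptedProc {N : ℕ} (L : Fin N → (Fin N → Y) → ℝ) : Prop :=
  ∀ (t : Fin N) (x y : Fin N → Y), (∀ s : Fin N, s ≤ t → x s = y s) → L t x = L t y

/-- `τ` is a stopping time of the canonical filtration on the path space. -/
def IsStopTime {N : ℕ} (τ : (Fin N → Y) → Fin N) : Prop :=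
  ∀ t : Fin N,
    MeasurableSet[MeasurableSpace.comap (restr (X := Y) (t.1 + 1) t.2) inferInstance]
      {x | τ x = t}

/-- The optimal stopping value `v^L(μ)`. -/
def stopVal {N : ℕ} (L : Fin N → (Fin N → Y) → ℝ) (μ : Measure (Fin N → Y)) : ℝ :=
  ⨅ τ : {τ : (Fin N → Y) → Fin N // IsStopTime τ}, ∫ x, L (τ.1 x) x ∂μ

variable [TopologicalSpace Y]

/-- `AC(X̄)`: adapted processes which are continuous and bounded. -/
def ACbdd {N : ℕ} (L : Fin N → (Fin N → Y) → ℝ) : Prop :=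
  (∀ t, Continuous (L t)) ∧ AdaptedProc L ∧ ∃ C : ℝ, ∀ t x, |L t x| ≤ C

/-- `AC_p(X̄)`: adapted continuous processes of growth of order `p`. -/
def ACp (p : ℝ) (d : Y → Y → ℝ≥0∞) {N : ℕ} (L : Fin N → (Fin N → Y) → ℝ) : Prop :=
  (∀ t, Continuous (L t)) ∧ AdaptedProc L ∧
    ∃ (C : ℝ) (x₀ : Fin N → Y), ∀ t x, |L t x| ≤ C * (1 + ((pathDist p d x₀ x) ^ p).toReal)

/-- The optimal stopping topology (weak version, bounded continuous rewards). -/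
def stopTopW (N : ℕ) : TopologicalSpace (Measure (Fin N → Y)) :=
  ⨅ L : {L : Fin N → (Fin N → Y) → ℝ // ACbdd L},
    TopologicalSpace.induced (stopVal L.1) inferInstance

/-- The `𝒲_p`-optimal stopping topology. -/
def stopTopWp (p : ℝ) (d : Y → Y → ℝ≥0∞) (N : ℕ) :
    TopologicalSpace (Measure (Fin N → Y)) :=
  ⨅ L : {L : Fin N → (Fin N → Y) → ℝ // ACp p d L},
    TopologicalSpace.induced (stopVal L.1) inferInstance

variable [PolishSpace Y] [BorelSpace Y] [Nonempty Y]

/-- Hellwig's map `I_t`, sending `μ` to the joint law of the first `t`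
coordinates together with the conditional law of the remaining coordinates. -/
def infoMap (N t : ℕ) (h : t ≤ N) (μ : Measure (Fin N → Y)) :
    Measure ((Fin t → Y) × Measure (Fin (N - t) → Y)) :=
  μ.map (fun x => (restr t h x,
    condK (μ.map (fun y => (restr t h y, tailr t h y))) (restr t h x)))

/-- Hellwig's information topology (weak version). -/
def infoTopW (N : ℕ) : TopologicalSpace (Measure (Fin N → Y)) :=
  ⨅ (t : ℕ) (_ : 1 ≤ t) (h : t ≤ N - 1),
    TopologicalSpace.induced (infoMap N t (le_trans h (Nat.sub_le N 1)))
      (weakTop (prodTop Pi.topologicalSpace (weakTop Pi.topologicalSpace)))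

/-- The `𝒲_p`-information topology. -/
def infoTopWp (p : ℝ) (d : Y → Y → ℝ≥0∞) (N : ℕ) :
    TopologicalSpace (Measure (Fin N → Y)) :=
  ⨅ (t : ℕ) (_ : 1 ≤ t) (h : t ≤ N - 1),
    TopologicalSpace.induced (infoMap N t (le_trans h (Nat.sub_le N 1)))
      (ballTop (Wp p (prodDist p (pathDist p d) (Wp p (pathDist p d)))))

/-- Aldous' prediction process `Z_t^μ` (as a function of the path). -/
def predict (N : ℕ) (μ : Measure (Fin N → Y)) (t : ℕ) (h : t ≤ N) :
    (Fin N → Y) → Measure (Fin N → Y) :=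
  fun x => condK (μ.map (fun y => (restr t h y, y))) (restr t h x)

/-- Aldous' map `E`, sending `μ` to the joint law of the path together with its
prediction process. -/
def aldousMap (N : ℕ) (μ : Measure (Fin N → Y)) :
    Measure ((Fin N → Y) × (Fin (N + 1) → Measure (Fin N → Y))) :=
  μ.map (fun x =>
    (x, fun t : Fin (N + 1) => predict N μ t.1 (Nat.lt_succ_iff.mp t.2) x))

/-- Aldous' extended weak topology. -/
def aldousTopW (N : ℕ) : TopologicalSpace (Measure (Fin N → Y)) :=
  TopologicalSpace.induced (aldousMap N)
    (weakTop (prodTop Pi.topologicalSpace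
      (@Pi.topologicalSpace (Fin (N + 1)) (fun _ => Measure (Fin N → Y))
        (fun _ => weakTop Pi.topologicalSpace))))

/-- The extended `𝒲_p`-topology. -/
def aldousTopWp (p : ℝ) (d : Y → Y → ℝ≥0∞) (N : ℕ) :
    TopologicalSpace (Measure (Fin N → Y)) :=
  TopologicalSpace.induced (aldousMap N)
    (ballTop (Wp p (prodDist p (pathDist p d)
      (fun Z Z' : Fin (N + 1) → Measure (Fin N → Y) =>
        (∑ t, Wp p (pathDist p d) (Z t) (Z' t) ^ p) ^ (1 / p)))))

end PathStructures

/-! ### The lifted two-time-point space `𝒳₁ × 𝒫_p(𝒳₂)` -/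

section Lifted

variable {A B : Type*} [MeasurableSpace A] [MeasurableSpace B]

/-- The nested distance on `𝒳₁ × 𝒫_p(𝒳₂)`. -/
def liftDist (p : ℝ) (dA : A → A → ℝ≥0∞) (dB : B → B → ℝ≥0∞) :
    (A × Measure B) → (A × Measure B) → ℝ≥0∞ :=
  fun u v => (dA u.1 v.1 ^ p + Wp p dB u.2 v.2 ^ p) ^ (1 / p)

/-- `η` is a version of the measure-valued conditional expectation
`E_γ[X̂₂ | Y⃗]` (i.e. the barycenter of a regular conditional law of `X̂₂`
given `Y⃗ = (Y₁, Ŷ₂)`). -/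
def IsCondBar (γ : Measure ((A × Measure B) × (A × Measure B)))
    (η : (A × Measure B) × (A × Measure B) → Measure B) : Prop :=
  (∃ g : (A × Measure B) → Measure B, Measurable g ∧ ∀ z, η z = g z.2) ∧
  (∀ z, IsProbabilityMeasure (η z)) ∧
  ∀ S : Set (A × Measure B), MeasurableSet S → ∀ E : Set B, MeasurableSet E →
    ∫⁻ z in {z | z.2 ∈ S}, η z E ∂γ = ∫⁻ z in {z | z.2 ∈ S}, z.1.2 E ∂γ

/-- `AW̄_p`, the `p`-Wasserstein distance on `𝒫_p(𝒳₁ × 𝒫_p(𝒳₂))`. -/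
def AWbar (p : ℝ) (dA : A → A → ℝ≥0∞) (dB : B → B → ℝ≥0∞)
    (μ ν : Measure (A × Measure B)) : ℝ≥0∞ :=
  Wp p (liftDist p dA dB) μ ν

/-- `CW̄_p`, the lifted causal Wasserstein "distance". -/
def CWbar (p : ℝ) (dA : A → A → ℝ≥0∞) (dB : B → B → ℝ≥0∞)
    (μ ν : Measure (A × Measure B)) : ℝ≥0∞ :=
  ⨅ γ ∈ Cpl μ ν, ⨅ η ∈ {η | IsCondBar γ η},
    (∫⁻ z, (dA z.1.1 z.2.1 ^ p + Wp p dB (η z) z.2.2 ^ p) ∂γ) ^ (1 / p)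

/-- `SCW̄_p`, the symmetrization of `CW̄_p`. -/
def SCWbar (p : ℝ) (dA : A → A → ℝ≥0∞) (dB : B → B → ℝ≥0∞)
    (μ ν : Measure (A × Measure B)) : ℝ≥0∞ :=
  max (CWbar p dA dB μ ν) (CWbar p dA dB ν μ)

/-- Membership in `𝒫_p(𝒳₁ × 𝒫_p(𝒳₂))`: a probability measure, concentrated on
`𝒳₁ × 𝒫_p(𝒳₂)`, with finite `p`-th moment for the nested distance. -/
def MemPpLift (p : ℝ) (dA : A → A → ℝ≥0∞) (dB : B → B → ℝ≥0∞)
    (μ : Measure (A × Measure B)) : Prop :=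
  IsProbabilityMeasure μ ∧ (∀ᵐ z ∂μ, MemPp p dB z.2) ∧
    ∃ z₀ : A × Measure B, MemPp p dB z₀.2 ∧ ∫⁻ z, liftDist p dA dB z₀ z ^ p ∂μ ≠ ∞

/-- Two-time-point causality: given a coupling `π` of measures on products
`A₁ × B₁` and `A₂ × B₂`, the conditional law of `Y₁` given `X = (X₁, X₂)`
coincides with the conditional law of `Y₁` given `X₁`. -/
def Causal2 {A₁ B₁ A₂ B₂ : Type*} [MeasurableSpace A₁] [MeasurableSpace B₁]
    [MeasurableSpace A₂] [MeasurableSpace B₂]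
    (π : Measure ((A₁ × B₁) × (A₂ × B₂))) : Prop :=
  ∀ S : Set A₂, MeasurableSet S →
    (π[fun z => S.indicator (fun _ => (1 : ℝ)) z.2.1 |
        MeasurableSpace.comap Prod.fst inferInstance])
      =ᵐ[π]
    (π[fun z => S.indicator (fun _ => (1 : ℝ)) z.2.1 |
        MeasurableSpace.comap (fun z => z.1.1) inferInstance])

/-- The two-time-point causal Wasserstein "distance" on `𝒫_p(𝒳₁ × 𝒳₂)`. -/
def CW2 (p : ℝ) (dA : A → A → ℝ≥0∞) (dB : B → B → ℝ≥0∞)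
    (μ ν : Measure (A × B)) : ℝ≥0∞ :=
  ⨅ π ∈ {π ∈ Cpl μ ν | Causal2 π},
    (∫⁻ z, (dA z.1.1 z.2.1 ^ p + dB z.1.2 z.2.2 ^ p) ∂π) ^ (1 / p)

end Lifted

/-!
Disintegrate a coupling of `μ` and `ν` as a kernel `κ` giving the law of `X` given `Y`, and a
coupling of `ν` and `lam` as a kernel `κ'` giving the law of `Y` given `Z`. The composition of the
two kernels couples `μ` with `lam`, and its conditional barycenter at `z` is the average over `κ' z`
of the conditional barycenter `g` of `κ`, while the conditional barycenter `g' z` of `κ'` is the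
average over `κ' z` of `y ↦ y.2`. As `W_p^p` is jointly convex, Jensen's inequality bounds the
distance between these two averages by the `L^p (κ' z)` norm of the distance between `g y` and
`y.2`; the triangle inequality for `W_p` and Minkowski's inequality do the rest.

Jensen's inequality for `W_p^p` on a finite space holds because `W_p^p` is the lower boundary of a
compact convex set, the image of the simplex of transport plans under marginals and cost. The
general case follows by projecting onto finitely many points of a dense sequence, which also gives
the measurability of `W_p`.
-/

lemma lintegral_rpow_le_add {Ω : Type*} [MeasurableSpace Ω] {θ : Measure Ω} {p : ℝ} (hp : 1 ≤ p)
    {f g h : Ω → ℝ≥0∞} (hf : AEMeasurable f θ) (hg : AEMeasurable g θ)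
    (hle : ∀ᵐ t ∂θ, h t ≤ f t + g t) :
    (∫⁻ t, h t ^ p ∂θ) ^ (1 / p) ≤ (∫⁻ t, f t ^ p ∂θ) ^ (1 / p) + (∫⁻ t, g t ^ p ∂θ) ^ (1 / p) := by
  have hp0 : 0 ≤ p := by linarith
  refine le_trans ?_ (ENNReal.lintegral_Lp_add_le hf hg hp)
  refine ENNReal.rpow_le_rpow (lintegral_mono_ae ?_) (by positivity)
  filter_upwards [hle] with t ht using ENNReal.rpow_le_rpow ht hp0

section Coupling

variable {S T Ω : Type*} [MeasurableSpace S] [MeasurableSpace T] [MeasurableSpace Ω]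

lemma Cpl.isProbabilityMeasure {μ : Measure S} {ν : Measure T} [IsProbabilityMeasure μ]
    {π : Measure (S × T)} (h : π ∈ Cpl μ ν) : IsProbabilityMeasure π := by
  have : IsProbabilityMeasure (π.map Prod.fst) := h.1 ▸ inferInstance
  exact Measure.isProbabilityMeasure_of_map Prod.fst

lemma map_prodMk_mem_Cpl (θ : Measure Ω) {f : Ω → S} {g : Ω → T} (hf : Measurable f)
    (hg : Measurable g) : θ.map (fun x => (f x, g x)) ∈ Cpl (θ.map f) (θ.map g) :=
  ⟨Measure.fst_map_prodMk hg, Measure.snd_map_prodMk hf⟩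

lemma Wp_rpow {p : ℝ} (hp : 0 < p) (d : S → S → ℝ≥0∞) (μ ν : Measure S) :
    Wp p d μ ν ^ p = ⨅ π ∈ Cpl μ ν, ∫⁻ z, d z.1 z.2 ^ p ∂π := by
  have h := (ENNReal.orderIsoRpow p hp).map_iInf₂
    fun π (_ : π ∈ Cpl μ ν) => (∫⁻ z, d z.1 z.2 ^ p ∂π) ^ (1 / p)
  rw [Wp]
  simpa only [ENNReal.orderIsoRpow_apply, ← ENNReal.rpow_mul, one_div_mul_cancel hp.ne',
    ENNReal.rpow_one] using h

lemma Wp_map_le {p : ℝ} (hp : 0 ≤ p) (d : S → S → ℝ≥0∞) (θ : Measure Ω) {f g : Ω → S}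
    (hf : Measurable f) (hg : Measurable g) :
    Wp p d (θ.map f) (θ.map g) ≤ (∫⁻ x, d (f x) (g x) ^ p ∂θ) ^ (1 / p) :=
  (iInf₂_le _ (map_prodMk_mem_Cpl θ hf hg)).trans <|
    ENNReal.rpow_le_rpow (lintegral_map_le _ _) (by positivity)

lemma Wp_map_map_le {p : ℝ} (hp : 0 ≤ p) (d : S → S → ℝ≥0∞) {m n : Measure Ω}
    {π : Measure (Ω × Ω)} (hπ : π ∈ Cpl m n) {f : Ω → S} (hf : Measurable f) :
    Wp p d (m.map f) (n.map f) ≤ (∫⁻ z, d (f z.1) (f z.2) ^ p ∂π) ^ (1 / p) := by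
  rw [← hπ.1, ← hπ.2, Measure.map_map hf measurable_fst, Measure.map_map hf measurable_snd]
  exact Wp_map_le hp d π (hf.comp measurable_fst) (hf.comp measurable_snd)

end Coupling

section Glue

variable {R S T : Type*} [MeasurableSpace R] [MeasurableSpace S] [MeasurableSpace T]

/-- The gluing of a law on `R × S` with a transition kernel out of `S`: the third coordinate is
conditionally independent of the first one given the second one. -/
def glue (π : Measure (R × S)) (κ : Kernel S T) : Measure ((R × S) × T) :=
  π ⊗ₘ κ.prodMkLeft R

lemma glue_map_fst (π : Measure (R × S)) [SFinite π] (κ : Kernel S T) [IsMarkovKernel κ] :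
    (glue π κ).map Prod.fst = π :=
  Measure.fst_compProd _ _

lemma glue_map_snd (π : Measure (R × S)) [SFinite π] (κ : Kernel S T) [IsMarkovKernel κ] :
    (glue π κ).map (fun t => (t.1.2, t.2)) = π.map Prod.snd ⊗ₘ κ := by
  ext s hs
  have hm : Measurable fun t : (R × S) × T => (t.1.2, t.2) := by fun_prop
  rw [Measure.map_apply hm hs, glue, Measure.compProd_apply (hm hs), Measure.compProd_apply hs,
    lintegral_map (Kernel.measurable_kernel_prodMk_left hs) measurable_snd]
  rfl

lemma exists_gluing [StandardBorelSpace T] [Nonempty T] (π : Measure (R × S)) [SFinite π]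
    (π' : Measure (S × T)) [IsFiniteMeasure π'] (h : π.map Prod.snd = π'.map Prod.fst) :
    ∃ θ : Measure ((R × S) × T), θ.map Prod.fst = π ∧ θ.map (fun t => (t.1.2, t.2)) = π' := by
  refine ⟨glue π π'.condKernel, glue_map_fst _ _, ?_⟩
  rw [glue_map_snd, h]
  exact π'.disintegrate π'.condKernel

end Glue

section Wasserstein

variable {B : Type*} [PseudoEMetricSpace B] [SecondCountableTopology B] [MeasurableSpace B]
  [OpensMeasurableSpace B]

lemma Wp_triangle [StandardBorelSpace B] {p : ℝ} (hp : 1 ≤ p) (m₁ m₂ m₃ : Measure B)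
    [IsProbabilityMeasure m₁] [IsProbabilityMeasure m₂] :
    Wp p edist m₁ m₃ ≤ Wp p edist m₁ m₂ + Wp p edist m₂ m₃ := by
  have := nonempty_of_isProbabilityMeasure m₁
  simp_rw [Wp, ENNReal.iInf_add, ENNReal.add_iInf]
  refine le_iInf₂ fun π₁ h₁ => le_iInf₂ fun π₂ h₂ => ?_
  have := Cpl.isProbabilityMeasure h₁
  have := Cpl.isProbabilityMeasure h₂
  obtain ⟨θ, rfl, rfl⟩ := exists_gluing π₁ π₂ (h₁.2.trans h₂.1.symm)
  have hθ₁ : θ.map (fun t => t.1.1) = m₁ := by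
    rw [← h₁.1, Measure.map_map (by fun_prop) (by fun_prop)]; rfl
  have hθ₃ : θ.map Prod.snd = m₃ := by
    rw [← h₂.2, Measure.map_map (by fun_prop) (by fun_prop)]; rfl
  rw [lintegral_map (by fun_prop) (by fun_prop), lintegral_map (by fun_prop) (by fun_prop)]
  calc Wp p edist m₁ m₃
      ≤ (∫⁻ t, edist t.1.1 t.2 ^ p ∂θ) ^ (1 / p) := by
        rw [← hθ₁, ← hθ₃]
        exact Wp_map_le (by linarith) _ _ (by fun_prop) (by fun_prop)
    _ ≤ _ := lintegral_rpow_le_add hp (by fun_prop) (by fun_prop)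
        (.of_forall fun t => edist_triangle _ _ _)

lemma rpow_moment_le_add_Wp {p : ℝ} (hp : 1 ≤ p) (x₀ : B) (m n : Measure B) :
    (∫⁻ x, edist x₀ x ^ p ∂n) ^ (1 / p) ≤ (∫⁻ x, edist x₀ x ^ p ∂m) ^ (1 / p) + Wp p edist m n := by
  simp_rw [Wp, ENNReal.add_iInf]
  refine le_iInf₂ fun π hπ => ?_
  rw [← hπ.1, ← hπ.2, lintegral_map (by fun_prop) (by fun_prop),
    lintegral_map (by fun_prop) (by fun_prop)]
  exact lintegral_rpow_le_add hp (by fun_prop) (by fun_prop)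
    (.of_forall fun t => edist_triangle _ _ _)

end Wasserstein

section LowerEnvelope

/-- The lower boundary of the region `K ⊆ E × ℝ`, as a function on `E`; it is `∞` where the fibre
of `K` is empty. -/
def lowerEnvelope {E : Type*} (K : Set (E × ℝ)) (x : E) : ℝ≥0∞ :=
  ⨅ t ∈ Prod.mk x ⁻¹' K, ENNReal.ofReal t

lemma lowerEnvelope_le {E : Type*} {K : Set (E × ℝ)} {x : E} {t : ℝ} (h : (x, t) ∈ K) :
    lowerEnvelope K x ≤ ENNReal.ofReal t :=
  iInf₂_le t h

section Topological

variable {E : Type*} [TopologicalSpace E] [T2Space E] {K : Set (E × ℝ)}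

lemma exists_ofReal_eq_lowerEnvelope (hK : IsCompact K) {x : E} (hx : ∃ t, (x, t) ∈ K) :
    ∃ t, (x, t) ∈ K ∧ ENNReal.ofReal t = lowerEnvelope K x := by
  have hfib : IsCompact (Prod.mk x ⁻¹' K) :=
    (Topology.IsClosedEmbedding.of_continuous_injective_isClosedMap (by fun_prop)
      (Prod.mk_right_injective x) (isClosedMap_prodMk_left x)).isCompact_preimage hK
  obtain ⟨t, ht, hmin⟩ := hfib.exists_isMinOn hx ENNReal.continuous_ofReal.continuousOn
  exact ⟨t, ht, le_antisymm (le_iInf₂ fun s hs => hmin hs) (lowerEnvelope_le ht)⟩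

lemma lowerSemicontinuous_lowerEnvelope (hK : IsCompact K) :
    LowerSemicontinuous (lowerEnvelope K) := by
  refine lowerSemicontinuous_iff_isClosed_preimage.2 fun c => ?_
  rcases eq_or_ne c ∞ with rfl | hc
  · simp only [Set.Iic_top, Set.preimage_univ, isClosed_univ]
  have heq : lowerEnvelope K ⁻¹' Set.Iic c
      = Prod.fst '' (K ∩ {z | ENNReal.ofReal z.2 ≤ c}) := by
    ext x
    constructor
    · intro hx
      have hne : ∃ t, (x, t) ∈ K := by
        by_contra! hempty
        simp [lowerEnvelope, hempty, hc] at hx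
      obtain ⟨t, ht, hval⟩ := exists_ofReal_eq_lowerEnvelope hK hne
      exact ⟨(x, t), ⟨ht, hval.le.trans hx⟩, rfl⟩
    · rintro ⟨⟨x, t⟩, ⟨ht, htc⟩, rfl⟩
      exact (lowerEnvelope_le ht).trans htc
  rw [heq]
  have hclosed : IsClosed {z : E × ℝ | ENNReal.ofReal z.2 ≤ c} :=
    isClosed_le (ENNReal.continuous_ofReal.comp continuous_snd) continuous_const
  exact ((hK.inter_right hclosed).image continuous_fst).isClosed

end Topological

lemma lowerEnvelope_integral_le {E Y : Type*} [NormedAddCommGroup E] [NormedSpace ℝ E]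
    [CompleteSpace E] [MeasurableSpace Y] {κ : Measure Y} [IsProbabilityMeasure κ] {K : Set (E × ℝ)}
    (hK : IsCompact K) (hconv : Convex ℝ K) (hpos : ∀ z ∈ K, 0 ≤ z.2) {f : Y → E}
    (hf : StronglyMeasurable f) (hfK : ∀ᵐ y ∂κ, ∃ t, (f y, t) ∈ K) :
    lowerEnvelope K (∫ y, f y ∂κ) ≤ ∫⁻ y, lowerEnvelope K (f y) ∂κ := by
  borelize E
  have hV : Measurable fun y => lowerEnvelope K (f y) :=
    (lowerSemicontinuous_lowerEnvelope hK).measurable.comp hf.measurable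
  have hmem : ∀ᵐ y ∂κ, (f y, (lowerEnvelope K (f y)).toReal) ∈ K := by
    filter_upwards [hfK] with y hy
    obtain ⟨t, ht, hval⟩ := exists_ofReal_eq_lowerEnvelope hK hy
    rwa [← hval, ENNReal.toReal_ofReal (hpos _ ht)]
  obtain ⟨C, hC⟩ := hK.isBounded.exists_norm_le
  have hfint : Integrable f κ := .of_bound hf.aestronglyMeasurable C <| by
    filter_upwards [hmem] with y hy using (norm_fst_le _).trans (hC _ hy)
  have hVint : Integrable (fun y => (lowerEnvelope K (f y)).toReal) κ :=
    .of_bound hV.ennreal_toReal.aestronglyMeasurable C <| by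
      filter_upwards [hmem] with y hy using (norm_snd_le _).trans (hC _ hy)
  have key := hconv.integral_mem hK.isClosed hmem (hfint.prodMk hVint)
  rw [integral_pair hfint hVint] at key
  calc lowerEnvelope K (∫ y, f y ∂κ)
      ≤ ENNReal.ofReal (∫ y, (lowerEnvelope K (f y)).toReal ∂κ) := lowerEnvelope_le key
    _ = ∫⁻ y, ENNReal.ofReal (lowerEnvelope K (f y)).toReal ∂κ :=
        ofReal_integral_eq_lintegral_ofReal hVint (.of_forall fun _ => ENNReal.toReal_nonneg)
    _ ≤ ∫⁻ y, lowerEnvelope K (f y) ∂κ := lintegral_mono fun _ => ENNReal.ofReal_toReal_le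

end LowerEnvelope

section TransportSet

variable {D : Type*} [Fintype D]

open Classical in
/-- Sends a transport plan with masses `w` to its two marginals and its cost for the cost
function `c`. -/
def transportMap (c : D → D → ℝ) : (D × D → ℝ) →ₗ[ℝ] ((D → ℝ) × (D → ℝ)) × ℝ :=
  ((LinearMap.pi fun i => ∑ z with z.1 = i, LinearMap.proj z).prod
    (LinearMap.pi fun j => ∑ z with z.2 = j, LinearMap.proj z)).prod
    (∑ z, c z.1 z.2 • LinearMap.proj z)

/-- The triples (first marginal, second marginal, `p`-cost) of all transport plans on `D`. The
cost is truncated by `toReal`, so `d` is meant to be finite. -/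
def transportSet (p : ℝ) (d : D → D → ℝ≥0∞) : Set (((D → ℝ) × (D → ℝ)) × ℝ) :=
  transportMap (fun i j => (d i j ^ p).toReal) '' stdSimplex ℝ (D × D)

lemma isCompact_transportSet (p : ℝ) (d : D → D → ℝ≥0∞) :
    IsCompact (transportSet p d) :=
  (isCompact_stdSimplex ℝ _).image (LinearMap.continuous_of_finiteDimensional _)

lemma convex_transportSet (p : ℝ) (d : D → D → ℝ≥0∞) : Convex ℝ (transportSet p d) :=
  (convex_stdSimplex ℝ _).linear_image _

lemma snd_nonneg_of_mem_transportSet (p : ℝ) (d : D → D → ℝ≥0∞) :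
    ∀ z ∈ transportSet p d, 0 ≤ z.2 := by
  rintro _ ⟨w, hw, rfl⟩
  simpa [transportMap] using
    Finset.sum_nonneg fun z _ => mul_nonneg ENNReal.toReal_nonneg (hw.1 z)

end TransportSet

section FiniteTransport

variable {D : Type*} [MeasurableSpace D]

/-- The point masses of a measure, as a vector. -/
def weights (m : Measure D) : D → ℝ := fun i => m.real {i}

lemma measurable_weights [MeasurableSingletonClass D] :
    Measurable (weights : Measure D → D → ℝ) :=
  measurable_pi_lambda _ fun i =>
    (Measure.measurable_coe (measurableSet_singleton i)).ennreal_toReal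

lemma weights_injective [Countable D] {m n : Measure D} [IsFiniteMeasure m] [IsFiniteMeasure n]
    (h : weights m = weights n) : m = n :=
  Measure.ext_of_singleton fun i => (measureReal_eq_measureReal_iff).1 (congrFun h i)

variable [Fintype D] [MeasurableSingletonClass D]

lemma weights_mem_stdSimplex (m : Measure D) [IsProbabilityMeasure m] :
    weights m ∈ stdSimplex ℝ D :=
  ⟨fun _ => measureReal_nonneg, by
    simp only [weights, sum_measureReal_singleton, Finset.coe_univ, probReal_univ]⟩

lemma exists_weights_eq {w : D → ℝ} (hw : w ∈ stdSimplex ℝ D) :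
    ∃ m : Measure D, IsFiniteMeasure m ∧ weights m = w := by
  classical
  refine ⟨∑ i, ENNReal.ofReal (w i) • Measure.dirac i, ⟨by simp [ENNReal.sum_lt_top]⟩, ?_⟩
  ext i
  simp [weights, measureReal_def, Finset.sum_apply, Set.indicator_apply, hw.1 i]

lemma weights_map {D' : Type*} [MeasurableSpace D'] [MeasurableSingletonClass D'] [DecidableEq D']
    (m : Measure D) [IsFiniteMeasure m] {f : D → D'} (hf : Measurable f) :
    weights (m.map f) = fun j => ∑ i with f i = j, weights m i := by
  ext j
  simp only [weights]
  rw [map_measureReal_apply hf (measurableSet_singleton j), sum_measureReal_singleton]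
  congr 1
  ext i
  simp

lemma integrable_weights {Y : Type*} [MeasurableSpace Y] {κ : Measure Y} [IsFiniteMeasure κ]
    {m : Y → Measure D} (hm : Measurable m) (hp : ∀ᵐ y ∂κ, IsProbabilityMeasure (m y)) :
    Integrable (fun y => weights (m y)) κ := by
  obtain ⟨C, hC⟩ := (isCompact_stdSimplex ℝ D).isBounded.exists_norm_le
  refine .of_bound (measurable_weights.comp hm).aestronglyMeasurable C ?_
  filter_upwards [hp] with y _ using hC _ (weights_mem_stdSimplex (m y))

lemma weights_bind {Y : Type*} [MeasurableSpace Y] {κ : Measure Y} [IsFiniteMeasure κ]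
    {m : Y → Measure D} (hm : Measurable m) (hp : ∀ᵐ y ∂κ, IsProbabilityMeasure (m y)) :
    weights (κ.bind m) = ∫ y, weights (m y) ∂κ := by
  have hmi : ∀ i, Measurable fun y => m y {i} := fun i =>
    (Measure.measurable_coe (measurableSet_singleton i)).comp hm
  ext i
  rw [eval_integral (fun i => (integrable_weights hm hp).eval i), weights, measureReal_def,
    Measure.bind_apply (measurableSet_singleton i) hm.aemeasurable]
  refine (integral_toReal (hmi i).aemeasurable ?_).symm
  filter_upwards [hp] with y hy using measure_lt_top _ _

lemma transportMap_weights (c : D → D → ℝ) (π : Measure (D × D)) [IsFiniteMeasure π] :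
    transportMap c (weights π) =
      ((weights (π.map Prod.fst), weights (π.map Prod.snd)), ∑ z, c z.1 z.2 * weights π z) := by
  classical
  rw [weights_map π measurable_fst, weights_map π measurable_snd]
  ext <;> simp [transportMap]

variable {p : ℝ} {d : D → D → ℝ≥0∞}

lemma mem_transportSet_iff (hp : 0 ≤ p) (hd : ∀ i j, d i j ≠ ∞) {m n : Measure D}
    [IsProbabilityMeasure m] [IsProbabilityMeasure n] {t : ℝ} :
    ((weights m, weights n), t) ∈ transportSet p d ↔
      ∃ π ∈ Cpl m n, (∫⁻ z, d z.1 z.2 ^ p ∂π).toReal = t := by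
  have hcost : ∀ (π : Measure (D × D)) [IsFiniteMeasure π], (∫⁻ z, d z.1 z.2 ^ p ∂π).toReal
      = ∑ z, (d z.1 z.2 ^ p).toReal * weights π z := fun π _ => by
    rw [lintegral_fintype, ENNReal.toReal_sum fun z _ => ENNReal.mul_ne_top
      (ENNReal.rpow_ne_top_of_nonneg hp (hd _ _)) (measure_ne_top π _)]
    simp only [ENNReal.toReal_mul, weights, measureReal_def]
  constructor
  · rintro ⟨w, hw, hwt⟩
    obtain ⟨π, hπ, rfl⟩ := exists_weights_eq hw
    rw [transportMap_weights, Prod.mk.injEq, Prod.mk.injEq] at hwt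
    exact ⟨π, ⟨weights_injective hwt.1.1, weights_injective hwt.1.2⟩, (hcost π).trans hwt.2⟩
  · rintro ⟨π, hπ, rfl⟩
    have := Cpl.isProbabilityMeasure hπ
    refine ⟨weights π, weights_mem_stdSimplex π, ?_⟩
    rw [transportMap_weights, hπ.1, hπ.2, hcost]

lemma exists_mem_transportSet (hp : 0 ≤ p) (hd : ∀ i j, d i j ≠ ∞) (m n : Measure D)
    [IsProbabilityMeasure m] [IsProbabilityMeasure n] :
    ∃ t, ((weights m, weights n), t) ∈ transportSet p d :=
  ⟨_, (mem_transportSet_iff hp hd).2 ⟨m.prod n, ⟨by simp, by simp⟩, rfl⟩⟩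

lemma Wp_rpow_eq_lowerEnvelope (hp : 0 < p) (hd : ∀ i j, d i j ≠ ∞) (m n : Measure D)
    [IsProbabilityMeasure m] [IsProbabilityMeasure n] :
    Wp p d m n ^ p = lowerEnvelope (transportSet p d) (weights m, weights n) := by
  have hfin : ∀ π ∈ Cpl m n, ∫⁻ z, d z.1 z.2 ^ p ∂π ≠ ∞ := fun π hπ => by
    have := Cpl.isProbabilityMeasure hπ
    rw [lintegral_fintype]
    exact ENNReal.sum_ne_top.2 fun z _ => ENNReal.mul_ne_top
      (ENNReal.rpow_ne_top_of_nonneg hp.le (hd _ _)) (measure_ne_top π _)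
  rw [Wp_rpow hp]
  refine le_antisymm (le_iInf₂ fun t ht => ?_) (le_iInf₂ fun π hπ => ?_)
  · obtain ⟨π, hπ, rfl⟩ := (mem_transportSet_iff hp.le hd).1 ht
    exact (iInf₂_le π hπ).trans_eq (ENNReal.ofReal_toReal (hfin π hπ)).symm
  · exact (lowerEnvelope_le ((mem_transportSet_iff hp.le hd).2 ⟨π, hπ, rfl⟩)).trans_eq
      (ENNReal.ofReal_toReal (hfin π hπ))

end FiniteTransport

lemma Wp_bind_rpow_le_lintegral_of_finite {D : Type*} [MeasurableSpace D] [Finite D]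
    [MeasurableSingletonClass D] {p : ℝ} (hp : 0 < p) {d : D → D → ℝ≥0∞} (hd : ∀ i j, d i j ≠ ∞)
    {Y : Type*} [MeasurableSpace Y] {κ : Measure Y} [IsProbabilityMeasure κ] {m n : Y → Measure D}
    (hm : Measurable m) (hn : Measurable n) (hmp : ∀ᵐ y ∂κ, IsProbabilityMeasure (m y))
    (hnp : ∀ᵐ y ∂κ, IsProbabilityMeasure (n y)) :
    Wp p d (κ.bind m) (κ.bind n) ^ p ≤ ∫⁻ y, Wp p d (m y) (n y) ^ p ∂κ := by
  have := Fintype.ofFinite D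
  have := isProbabilityMeasure_bind hm.aemeasurable hmp
  have := isProbabilityMeasure_bind hn.aemeasurable hnp
  have hmem : ∀ᵐ y ∂κ, ∃ t, ((weights (m y), weights (n y)), t) ∈ transportSet p d := by
    filter_upwards [hmp, hnp] with y _ _ using exists_mem_transportSet hp.le hd (m y) (n y)
  have hmeas : StronglyMeasurable fun y => (weights (m y), weights (n y)) :=
    ((measurable_weights.comp hm).prodMk (measurable_weights.comp hn)).stronglyMeasurable
  calc Wp p d (κ.bind m) (κ.bind n) ^ p
      = lowerEnvelope (transportSet p d) (∫ y, (weights (m y), weights (n y)) ∂κ) := by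
        rw [Wp_rpow_eq_lowerEnvelope hp hd, weights_bind hm hmp, weights_bind hn hnp,
          integral_pair (integrable_weights hm hmp) (integrable_weights hn hnp)]
    _ ≤ ∫⁻ y, lowerEnvelope (transportSet p d) (weights (m y), weights (n y)) ∂κ :=
        lowerEnvelope_integral_le (isCompact_transportSet p d) (convex_transportSet p d)
          (snd_nonneg_of_mem_transportSet p d) hmeas hmem
    _ = ∫⁻ y, Wp p d (m y) (n y) ^ p ∂κ := lintegral_congr_ae <| by
        filter_upwards [hmp, hnp] with y _ _
        exact (Wp_rpow_eq_lowerEnvelope hp hd (m y) (n y)).symm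

lemma map_bind_eq_bind_map {Y S T : Type*} [MeasurableSpace Y] [MeasurableSpace S]
    [MeasurableSpace T] (κ : Measure Y) {m : Y → Measure S} (hm : Measurable m) {f : S → T}
    (hf : Measurable f) : (κ.bind m).map f = κ.bind fun y => (m y).map f := by
  have hmap : Measurable fun y => (m y).map f := (Measure.measurable_map f hf).comp hm
  ext s hs
  rw [Measure.map_apply hf hs, Measure.bind_apply (hf hs) hm.aemeasurable,
    Measure.bind_apply hs hmap.aemeasurable]
  simp only [Measure.map_apply hf hs]

section Moments

variable {B : Type*} [PseudoMetricSpace B] [MeasurableSpace B] [OpensMeasurableSpace B] {p : ℝ}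

lemma MemPp.lintegral_edist_rpow_ne_top (hp : 1 ≤ p) {m : Measure B} (hm : MemPp p edist m)
    (x : B) : ∫⁻ y, edist x y ^ p ∂m ≠ ∞ := by
  have : 0 < p := by linarith
  obtain ⟨_, x₀, hx₀⟩ := hm
  have hle : (∫⁻ y, edist x y ^ p ∂m) ^ (1 / p)
      ≤ (∫⁻ _, edist x x₀ ^ p ∂m) ^ (1 / p) + (∫⁻ y, edist x₀ y ^ p ∂m) ^ (1 / p) :=
    lintegral_rpow_le_add hp (by fun_prop) (by fun_prop)
      (.of_forall fun y => edist_triangle _ _ _)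
  refine (ENNReal.rpow_lt_top_iff_of_pos (by positivity)).1 (hle.trans_lt ?_) |>.ne
  rw [lintegral_const, measure_univ, mul_one]
  exact ENNReal.add_lt_top.2 ⟨by finiteness, by finiteness⟩

lemma MemPp.ae_of_bind {Y : Type*} [MeasurableSpace Y] {κ : Measure Y} {m : Y → Measure B}
    (hm : Measurable m) (hmp : ∀ᵐ y ∂κ, IsProbabilityMeasure (m y))
    (h : MemPp p edist (κ.bind m)) : ∀ᵐ y ∂κ, MemPp p edist (m y) := by
  obtain ⟨_, x₀, hx₀⟩ := h
  rw [Measure.lintegral_bind hm.aemeasurable (by fun_prop)] at hx₀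
  have hmom : Measurable fun y => ∫⁻ x, edist x₀ x ^ p ∂m y :=
    (Measure.measurable_lintegral (by fun_prop)).comp hm
  filter_upwards [hmp, ae_lt_top hmom hx₀] with y hy hlt using ⟨hy, x₀, hlt.ne⟩

end Moments

section Quantization

open TopologicalSpace (denseSeq denseRange_denseSeq)

variable (B : Type*) [PseudoMetricSpace B] [SecondCountableTopology B] [MeasurableSpace B]
  [OpensMeasurableSpace B] [Nonempty B]

/-- Nearest-point projection onto the first `k + 1` points of a dense sequence, recorded by the
index of the point. -/
def quantize (k : ℕ) (x : B) : Set.Iic k :=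
  ⟨SimpleFunc.nearestPtInd (denseSeq B) k x, SimpleFunc.nearestPtInd_le _ k x⟩

lemma measurable_quantize (k : ℕ) : Measurable (quantize B k) :=
  (SimpleFunc.measurable _).subtype_mk

variable {B}

/-- The `p`-Wasserstein distance between the images of `m` and `n` under the projection onto the
first `k + 1` points of a dense sequence. -/
def quantizedWp (p : ℝ) (k : ℕ) (m n : Measure B) : ℝ≥0∞ :=
  Wp p (fun i j : Set.Iic k => edist (denseSeq B i) (denseSeq B j)) (m.map (quantize B k))
    (n.map (quantize B k))

/-- The `L^p` distance moved under `m` by the projection onto the first `k + 1` points of a dense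
sequence. -/
def quantizationError (p : ℝ) (k : ℕ) (m : Measure B) : ℝ≥0∞ :=
  (∫⁻ x, edist x (denseSeq B (quantize B k x)) ^ p ∂m) ^ (1 / p)

variable {p : ℝ}

lemma measurable_denseSeq_quantize (k : ℕ) : Measurable fun x => denseSeq B (quantize B k x) :=
  (SimpleFunc.nearestPt (denseSeq B) k).measurable

lemma measurable_quantizationError (k : ℕ) :
    Measurable (quantizationError p k : Measure B → ℝ≥0∞) := by
  have := measurable_denseSeq_quantize (B := B) k
  exact (Measure.measurable_lintegral (by fun_prop)).pow_const _

lemma tendsto_quantizationError (hp : 1 ≤ p) {m : Measure B} (hm : MemPp p edist m) :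
    Tendsto (fun k => quantizationError p k m) atTop (𝓝 0) := by
  have hp0 : 0 < p := by linarith
  have hlim : Tendsto (fun k => ∫⁻ x, edist x (denseSeq B (quantize B k x)) ^ p ∂m) atTop
      (𝓝 (∫⁻ _, 0 ∂m)) := by
    refine tendsto_lintegral_of_dominated_convergence (fun x => edist (denseSeq B 0) x ^ p)
      (fun k => ?_) (fun k => .of_forall fun x => ?_) (hm.lintegral_edist_rpow_ne_top hp _)
      (.of_forall fun x => ?_)
    · have := measurable_denseSeq_quantize (B := B) k
      fun_prop
    · refine ENNReal.rpow_le_rpow ?_ hp0.le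
      rw [edist_comm]
      exact SimpleFunc.edist_nearestPt_le _ _ (Nat.zero_le k)
    · have h : Tendsto (fun k => denseSeq B (quantize B k x)) atTop (𝓝 x) :=
        SimpleFunc.tendsto_nearestPt ((denseRange_denseSeq B).closure_eq.symm ▸ Set.mem_univ x)
      simpa only [edist_comm x, ENNReal.zero_rpow_of_pos hp0] using
        (tendsto_iff_edist_tendsto_0.1 h).ennrpow_const p
  simpa only [quantizationError, lintegral_zero, ENNReal.zero_rpow_of_pos (one_div_pos.2 hp0)]
    using hlim.ennrpow_const (1 / p)

lemma Wp_le_add_quantizedWp [StandardBorelSpace B] (hp : 1 ≤ p) (k : ℕ) (m n : Measure B)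
    [IsProbabilityMeasure m] [IsProbabilityMeasure n] :
    Wp p edist m n ≤
      quantizationError p k m + (quantizedWp p k m n + quantizationError p k n) := by
  have hp0 : 0 ≤ p := by linarith
  have hN := measurable_denseSeq_quantize (B := B) k
  have := Measure.isProbabilityMeasure_map (μ := m) hN.aemeasurable
  have := Measure.isProbabilityMeasure_map (μ := n) hN.aemeasurable
  refine (Wp_triangle hp m (m.map fun x => denseSeq B (quantize B k x)) n).trans
    (add_le_add ?_ ((Wp_triangle hp _ (n.map fun x => denseSeq B (quantize B k x)) n).trans
      (add_le_add ?_ ?_)))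
  · simpa [quantizationError] using Wp_map_le hp0 edist m measurable_id hN
  · refine le_iInf₂ fun π hπ => ?_
    have h := Wp_map_map_le hp0 edist hπ (f := fun i => denseSeq B (i : Set.Iic k))
      (measurable_of_countable _)
    rwa [Measure.map_map (measurable_of_countable _) (measurable_quantize B k),
      Measure.map_map (measurable_of_countable _) (measurable_quantize B k)] at h
  · simpa [quantizationError, edist_comm] using Wp_map_le hp0 edist n hN measurable_id

lemma quantizedWp_le_add_Wp (hp : 1 ≤ p) (k : ℕ) (m n : Measure B) :
    quantizedWp p k m n ≤
      quantizationError p k m + (Wp p edist m n + quantizationError p k n) := by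
  have hN := measurable_denseSeq_quantize (B := B) k
  simp_rw [Wp, ENNReal.iInf_add, ENNReal.add_iInf]
  refine le_iInf₂ fun π hπ => ?_
  refine (Wp_map_map_le (by linarith) _ hπ (measurable_quantize B k)).trans ?_
  simp_rw [quantizationError, ← hπ.1, ← hπ.2]
  rw [lintegral_map (by fun_prop) (by fun_prop), lintegral_map (by fun_prop) (by fun_prop)]
  refine (lintegral_rpow_le_add hp (f := fun z => edist z.1 (denseSeq B (quantize B k z.1)))
    (g := fun z => edist z.1 (denseSeq B (quantize B k z.2))) (by fun_prop) (by fun_prop)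
    (.of_forall fun z => edist_triangle_left _ _ _)).trans (add_le_add_right ?_ _)
  exact lintegral_rpow_le_add hp (by fun_prop) (by fun_prop)
    (.of_forall fun z => edist_triangle _ _ _)

variable [StandardBorelSpace B]

lemma tendsto_quantizedWp (hp : 1 ≤ p) {m n : Measure B} (hm : MemPp p edist m)
    (hn : MemPp p edist n) :
    Tendsto (fun k => quantizedWp p k m n) atTop (𝓝 (Wp p edist m n)) := by
  have := hm.1
  have := hn.1
  have hm0 := tendsto_quantizationError hp hm
  have hn0 := tendsto_quantizationError hp hn
  have hlower : Tendsto (fun k => Wp p edist m n - quantizationError p k m -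
      quantizationError p k n) atTop (𝓝 (Wp p edist m n)) := by
    simpa using (ENNReal.Tendsto.sub (ENNReal.Tendsto.sub tendsto_const_nhds hm0 (.inr (by simp)))
      hn0 (.inr (by simp)))
  have hupper : Tendsto (fun k => quantizationError p k m +
      (Wp p edist m n + quantizationError p k n)) atTop (𝓝 (Wp p edist m n)) := by
    simpa using hm0.add (tendsto_const_nhds.add hn0)
  refine tendsto_of_tendsto_of_tendsto_of_le_of_le hlower hupper (fun k => ?_)
    fun k => quantizedWp_le_add_Wp hp k m n
  rw [tsub_le_iff_right, tsub_le_iff_left]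
  exact Wp_le_add_quantizedWp hp k m n

lemma exists_measurable_eq_Wp (hp : 1 ≤ p) :
    ∃ W : Measure B × Measure B → ℝ≥0∞, Measurable W ∧
      ∀ m n, MemPp p edist m → MemPp p edist n → W (m, n) = Wp p edist m n := by
  have hp0 : 0 < p := by linarith
  let d (k : ℕ) (i j : Set.Iic k) : ℝ≥0∞ := edist (denseSeq B i) (denseSeq B j)
  let W (k : ℕ) (z : Measure B × Measure B) : ℝ≥0∞ := lowerEnvelope (transportSet p (d k))
    (weights (z.1.map (quantize B k)), weights (z.2.map (quantize B k))) ^ (1 / p)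
  have hWm (k : ℕ) : Measurable (W k) := by
    have hw : Measurable fun m : Measure B => weights (m.map (quantize B k)) :=
      measurable_weights.comp (Measure.measurable_map _ (measurable_quantize B k))
    exact ((lowerSemicontinuous_lowerEnvelope (isCompact_transportSet p (d k))).measurable.comp
      ((hw.comp measurable_fst).prodMk (hw.comp measurable_snd))).pow_const _
  refine ⟨fun z => limsup (fun k => W k z) atTop, .limsup hWm, fun m n hm hn => ?_⟩
  have := hm.1
  have := hn.1
  have hW (k : ℕ) : W k (m, n) = quantizedWp p k m n := by
    have := Measure.isProbabilityMeasure_map (μ := m) (measurable_quantize B k).aemeasurable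
    have := Measure.isProbabilityMeasure_map (μ := n) (measurable_quantize B k).aemeasurable
    simp only [W, d, quantizedWp]
    rw [← Wp_rpow_eq_lowerEnvelope hp0 (fun i j => edist_ne_top _ _), ← ENNReal.rpow_mul,
      mul_one_div_cancel hp0.ne', ENNReal.rpow_one]
  simpa only [hW] using (tendsto_quantizedWp hp hm hn).limsup_eq

end Quantization

section Jensen

variable {B : Type*} [PseudoMetricSpace B] [SecondCountableTopology B] [MeasurableSpace B]
  [OpensMeasurableSpace B] {p : ℝ} {Y : Type*} [MeasurableSpace Y] {κ : Measure Y}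
  {m n : Y → Measure B}

lemma aemeasurable_Wp [Nonempty B] [StandardBorelSpace B] (hp : 1 ≤ p) (hm : Measurable m)
    (hn : Measurable n) (hmp : ∀ᵐ y ∂κ, MemPp p edist (m y))
    (hnp : ∀ᵐ y ∂κ, MemPp p edist (n y)) :
    AEMeasurable (fun y => Wp p edist (m y) (n y)) κ := by
  obtain ⟨W, hWm, hW⟩ := exists_measurable_eq_Wp (B := B) hp
  refine ⟨fun y => W (m y, n y), hWm.comp (hm.prodMk hn), ?_⟩
  filter_upwards [hmp, hnp] with y h₁ h₂ using (hW _ _ h₁ h₂).symm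

lemma lintegral_quantizationError_rpow [Nonempty B] (hp : 0 < p) (k : ℕ) (hm : Measurable m) :
    (∫⁻ y, quantizationError p k (m y) ^ p ∂κ) ^ (1 / p) = quantizationError p k (κ.bind m) := by
  have := measurable_denseSeq_quantize (B := B) k
  simp only [quantizationError, ← ENNReal.rpow_mul, one_div_mul_cancel hp.ne', ENNReal.rpow_one]
  rw [Measure.lintegral_bind hm.aemeasurable (by fun_prop)]

lemma quantizedWp_bind_le [Nonempty B] [IsProbabilityMeasure κ] (hp : 0 < p) (k : ℕ)
    (hm : Measurable m) (hn : Measurable n) (hmp : ∀ᵐ y ∂κ, IsProbabilityMeasure (m y))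
    (hnp : ∀ᵐ y ∂κ, IsProbabilityMeasure (n y)) :
    quantizedWp p k (κ.bind m) (κ.bind n) ≤
      (∫⁻ y, quantizedWp p k (m y) (n y) ^ p ∂κ) ^ (1 / p) := by
  have hq := measurable_quantize B k
  have hmap {m : Y → Measure B} (h : ∀ᵐ y ∂κ, IsProbabilityMeasure (m y)) :
      ∀ᵐ y ∂κ, IsProbabilityMeasure ((m y).map (quantize B k)) :=
    h.mono fun y _ => Measure.isProbabilityMeasure_map hq.aemeasurable
  rw [one_div, ENNReal.le_rpow_inv_iff hp, quantizedWp, map_bind_eq_bind_map κ hm hq,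
    map_bind_eq_bind_map κ hn hq]
  exact Wp_bind_rpow_le_lintegral_of_finite hp (fun i j => edist_ne_top _ _)
    ((Measure.measurable_map _ hq).comp hm) ((Measure.measurable_map _ hq).comp hn) (hmap hmp)
    (hmap hnp)

lemma Wp_bind_le [StandardBorelSpace B] [IsProbabilityMeasure κ] (hp : 1 ≤ p) (hm : Measurable m)
    (hn : Measurable n) (hmp : ∀ᵐ y ∂κ, IsProbabilityMeasure (m y))
    (hnp : ∀ᵐ y ∂κ, IsProbabilityMeasure (n y)) (hmb : MemPp p edist (κ.bind m))
    (hnb : MemPp p edist (κ.bind n)) :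
    Wp p edist (κ.bind m) (κ.bind n) ≤ (∫⁻ y, Wp p edist (m y) (n y) ^ p ∂κ) ^ (1 / p) := by
  have hp0 : 0 < p := by linarith
  have : Nonempty B := ⟨hmb.2.choose⟩
  have hW := aemeasurable_Wp hp hm hn (MemPp.ae_of_bind hm hmp hmb) (MemPp.ae_of_bind hn hnp hnb)
  have herr {m : Y → Measure B} (h : Measurable m) (k : ℕ) :
      AEMeasurable (fun y => quantizationError p k (m y)) κ :=
    ((measurable_quantizationError k).comp h).aemeasurable
  have hbound (k : ℕ) : quantizedWp p k (κ.bind m) (κ.bind n) ≤ quantizationError p k (κ.bind m) +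
      ((∫⁻ y, Wp p edist (m y) (n y) ^ p ∂κ) ^ (1 / p) + quantizationError p k (κ.bind n)) := by
    simp_rw [← lintegral_quantizationError_rpow hp0 k hm,
      ← lintegral_quantizationError_rpow hp0 k hn]
    calc quantizedWp p k (κ.bind m) (κ.bind n)
        ≤ (∫⁻ y, quantizedWp p k (m y) (n y) ^ p ∂κ) ^ (1 / p) :=
          quantizedWp_bind_le hp0 k hm hn hmp hnp
      _ ≤ _ := lintegral_rpow_le_add hp (herr hm k) (hW.add (herr hn k))
          (.of_forall fun y => quantizedWp_le_add_Wp hp k (m y) (n y))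
      _ ≤ _ := add_le_add_right
          (lintegral_rpow_le_add hp hW (herr hn k) (.of_forall fun y => le_rfl)) _
  refine le_of_tendsto_of_tendsto' (tendsto_quantizedWp hp hmb hnb) ?_ hbound
  simpa using (tendsto_quantizationError hp hmb).add
    (tendsto_const_nhds.add (tendsto_quantizationError hp hnb))

end Jensen

section RationalCDF

/-- The restriction to `ℚ` of the cumulative distribution function of a measure on `ℝ`. -/
def ratCDF (m : Measure ℝ) : ℚ → ℝ := fun q => m.real (Set.Iic (q : ℝ))

/-- The probability measure on `ℝ` with a given cumulative distribution function on `ℚ`; functions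
that are not of this kind are sent to a default law. -/
def ofRatCDF (f : ℚ → ℝ) : Measure ℝ :=
  (stieltjesOfMeasurableRat (id : (ℚ → ℝ) → ℚ → ℝ) measurable_id f).measure

lemma measurable_ratCDF : Measurable ratCDF :=
  measurable_pi_lambda _ fun _ => (Measure.measurable_coe measurableSet_Iic).ennreal_toReal

lemma measurable_ofRatCDF : Measurable ofRatCDF :=
  measurable_measure_stieltjesOfMeasurableRat measurable_id

lemma isRatStieltjesPoint_ratCDF (m : Measure ℝ) [IsProbabilityMeasure m] :
    IsRatStieltjesPoint (id : (ℚ → ℝ) → ℚ → ℝ) (ratCDF m) := by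
  have hcdf : ratCDF m = fun q : ℚ => cdf m q := funext fun q => (cdf_eq_real m q).symm
  rw [hcdf]
  refine ⟨fun a b hab => monotone_cdf m (by exact_mod_cast hab),
    (tendsto_cdf_atTop m).comp (tendsto_ratCast_atTop_iff.2 tendsto_id),
    (tendsto_cdf_atBot m).comp (tendsto_ratCast_atBot_iff.2 tendsto_id), fun t => ?_⟩
  rw [id, ← (cdf m).iInf_rat_gt_eq t]
  exact (Equiv.subtypeEquivRight fun r : ℚ => by simp).iInf_congr fun _ => rfl

lemma ofRatCDF_ratCDF (m : Measure ℝ) [IsProbabilityMeasure m] : ofRatCDF (ratCDF m) = m := by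
  have hcdf : stieltjesOfMeasurableRat id measurable_id (ratCDF m) = cdf m := by
    ext x
    rw [← StieltjesFunction.iInf_rat_gt_eq, ← StieltjesFunction.iInf_rat_gt_eq]
    simp only [stieltjesOfMeasurableRat_eq, cdf_eq_real,
      toRatCDF_of_isRatStieltjesPoint (isRatStieltjesPoint_ratCDF m), id, ratCDF]
  rw [ofRatCDF, hcdf, measure_cdf]

end RationalCDF

section Disintegration

lemma exists_measurable_leftInverse_prod_measure (A B : Type*) [MeasurableSpace A]
    [MeasurableSpace B] [StandardBorelSpace B] [Nonempty B] :
    ∃ (e : A × Measure B → A × (ℚ → ℝ)) (r : A × (ℚ → ℝ) → A × Measure B),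
      Measurable e ∧ Measurable r ∧ ∀ z, IsProbabilityMeasure z.2 → r (e z) = z := by
  have he := measurableEmbedding_embeddingReal B
  refine ⟨Prod.map id fun m => ratCDF (m.map (embeddingReal B)),
    Prod.map id fun f => (ofRatCDF f).map he.invFun,
    measurable_id.prodMap (measurable_ratCDF.comp (Measure.measurable_map _ he.measurable)),
    measurable_id.prodMap ((Measure.measurable_map _ he.measurable_invFun).comp
      measurable_ofRatCDF), fun z hz => Prod.ext rfl ?_⟩
  have := Measure.isProbabilityMeasure_map (μ := z.2) he.measurable.aemeasurable
  simp only [Prod.map_snd]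
  rw [ofRatCDF_ratCDF, Measure.map_map he.measurable_invFun he.measurable,
    he.leftInverse_invFun.id, Measure.map_id]

lemma exists_isMarkovKernel_compProd_eq_of_leftInverse {T Ω Ω' : Type*} [MeasurableSpace T]
    [MeasurableSpace Ω] [MeasurableSpace Ω'] [StandardBorelSpace Ω'] [Nonempty Ω']
    (γ : Measure (T × Ω)) [IsFiniteMeasure γ] {e : Ω → Ω'} {r : Ω' → Ω} (he : Measurable e)
    (hr : Measurable r) (h : ∀ᵐ z ∂γ, r (e z.2) = z.2) :
    ∃ κ : Kernel T Ω, IsMarkovKernel κ ∧ γ.map Prod.fst ⊗ₘ κ = γ := by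
  have hme : Measurable (Prod.map (id : T → T) e) := measurable_id.prodMap he
  have hmr : Measurable (Prod.map (id : T → T) r) := measurable_id.prodMap hr
  let γ' := γ.map (Prod.map id e)
  have hfst : γ.map Prod.fst = γ'.fst := by
    rw [Measure.fst, Measure.map_map measurable_fst hme]; rfl
  refine ⟨γ'.condKernel.map r, Kernel.IsMarkovKernel.map _ hr, ?_⟩
  rw [hfst, Measure.compProd_map hr, γ'.disintegrate γ'.condKernel, Measure.map_map hmr hme]
  conv_rhs => rw [← Measure.map_id (μ := γ)]
  refine Measure.map_congr ?_
  filter_upwards [h] with z hz using Prod.ext rfl hz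

/-- `Measure B` is not a standard Borel space, but the probability measures are a measurable retract
of the standard Borel space `ℚ → ℝ`. -/
lemma exists_isMarkovKernel_compProd_eq {T A B : Type*} [MeasurableSpace T] [MeasurableSpace A]
    [StandardBorelSpace A] [Nonempty A] [MeasurableSpace B] [StandardBorelSpace B] [Nonempty B]
    (γ : Measure (T × (A × Measure B))) [IsFiniteMeasure γ]
    (h : ∀ᵐ z ∂γ, IsProbabilityMeasure z.2.2) :
    ∃ κ : Kernel T (A × Measure B), IsMarkovKernel κ ∧ γ.map Prod.fst ⊗ₘ κ = γ := by
  obtain ⟨e, r, he, hr, hre⟩ := exists_measurable_leftInverse_prod_measure A B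
  exact exists_isMarkovKernel_compProd_eq_of_leftInverse γ he hr (h.mono fun z hz => hre z.2 hz)

end Disintegration

section BackwardKernel

variable {R S T : Type*} [MeasurableSpace R] [MeasurableSpace S] [MeasurableSpace T]

/-- The joint law of `(X, Y)` when `Y` has law `ν` and `X` has law `κ y` given `Y = y`. -/
def revCompProd (ν : Measure T) (κ : Kernel T S) : Measure (S × T) := (ν ⊗ₘ κ).map Prod.swap

lemma revCompProd_mem_Cpl (ν : Measure T) [SFinite ν] (κ : Kernel T S) [IsMarkovKernel κ] :
    revCompProd ν κ ∈ Cpl (ν.bind κ) ν := by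
  constructor
  · rw [← Measure.snd_compProd]
    exact Measure.fst_map_swap
  · exact Measure.snd_map_swap.trans (Measure.fst_compProd ν κ)

lemma setLIntegral_revCompProd (ν : Measure T) [SFinite ν] (κ : Kernel T S) [IsSFiniteKernel κ]
    {U : Set T} (hU : MeasurableSet U) {f : S × T → ℝ≥0∞} (hf : Measurable f) :
    ∫⁻ z in {z | z.2 ∈ U}, f z ∂revCompProd ν κ = ∫⁻ y in U, ∫⁻ x, f (x, y) ∂κ y ∂ν := by
  have hU' : MeasurableSet {z : S × T | z.2 ∈ U} := measurable_snd hU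
  have hswap : Prod.swap ⁻¹' {z : S × T | z.2 ∈ U} = U ×ˢ Set.univ := Set.prod_univ.symm
  rw [revCompProd, setLIntegral_map hU' hf measurable_swap, hswap,
    Measure.setLIntegral_compProd (f := fun z => f z.swap) (hf.comp measurable_swap) hU .univ]
  simp only [Measure.restrict_univ, Prod.swap_prod_mk]

lemma glue_compProd_map (ν : Measure R) [SFinite ν] (κ : Kernel R S) [IsSFiniteKernel κ]
    (η : Kernel S T) [IsSFiniteKernel η] :
    (glue (ν ⊗ₘ κ) η).map (fun t => (t.1.1, t.2)) = ν ⊗ₘ (η ∘ₖ κ) := by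
  ext s hs
  have hm : Measurable fun t : (R × S) × T => (t.1.1, t.2) := by fun_prop
  rw [Measure.map_apply hm hs, glue, Measure.compProd_apply (hm hs), Measure.compProd_apply hs,
    Measure.lintegral_compProd (Kernel.measurable_kernel_prodMk_left (hm hs))]
  refine lintegral_congr fun r => ?_
  rw [Kernel.comp_apply' _ _ _ (measurable_prodMk_left hs)]
  rfl

lemma exists_gluing_revCompProd (ν : Measure R) [SFinite ν] (κ : Kernel R S) [IsMarkovKernel κ]
    (η : Kernel S T) [IsMarkovKernel η] :
    ∃ θ : Measure ((R × S) × T),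
      θ.map (fun t => (t.2, t.1.1)) = revCompProd ν (η ∘ₖ κ) ∧
      θ.map (fun t => (t.2, t.1.2)) = revCompProd (ν.bind κ) η ∧
      θ.map (fun t => (t.1.2, t.1.1)) = revCompProd ν κ := by
  refine ⟨glue (ν ⊗ₘ κ) η, ?_, ?_, ?_⟩
  · rw [revCompProd, ← glue_compProd_map, Measure.map_map (by fun_prop) (by fun_prop)]
    rfl
  · rw [revCompProd, ← Measure.snd_compProd, Measure.snd, ← glue_map_snd,
      Measure.map_map (by fun_prop) (by fun_prop)]
    rfl
  · conv_rhs => rw [revCompProd, ← glue_map_fst (ν ⊗ₘ κ) η]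
    rw [Measure.map_map (by fun_prop) (by fun_prop)]
    rfl

lemma exists_revCompProd_eq {A B : Type*} [MeasurableSpace A] [StandardBorelSpace A] [Nonempty A]
    [MeasurableSpace B] [StandardBorelSpace B] [Nonempty B] {μ : Measure (A × Measure B)}
    [IsProbabilityMeasure μ] {ν : Measure T} (hμ : ∀ᵐ x ∂μ, IsProbabilityMeasure x.2)
    {γ : Measure ((A × Measure B) × T)} (hγ : γ ∈ Cpl μ ν) :
    ∃ κ : Kernel T (A × Measure B), IsMarkovKernel κ ∧ ν.bind κ = μ ∧ revCompProd ν κ = γ := by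
  have := Cpl.isProbabilityMeasure hγ
  have : IsProbabilityMeasure ν :=
    hγ.2 ▸ Measure.isProbabilityMeasure_map measurable_snd.aemeasurable
  have hsnd : (γ.map Prod.swap).map Prod.snd = μ := Measure.snd_map_swap.trans hγ.1
  have hfst : (γ.map Prod.swap).map Prod.fst = ν := Measure.fst_map_swap.trans hγ.2
  obtain ⟨κ, hκ, h⟩ := exists_isMarkovKernel_compProd_eq (γ.map Prod.swap)
    (ae_of_ae_map measurable_snd.aemeasurable (hsnd ▸ hμ))
  rw [hfst] at h
  refine ⟨κ, hκ, ?_, ?_⟩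
  · rw [← Measure.snd_compProd, h, Measure.snd, hsnd]
  · rw [revCompProd, h, Measure.map_map measurable_swap measurable_swap, Prod.swap_swap_eq,
      Measure.map_id]

end BackwardKernel

section ConditionalBarycenter

lemma ae_eq_measure_of_forall_ae_eq {B Y : Type*} [MeasurableSpace B]
    [MeasurableSpace.CountablyGenerated B] [MeasurableSpace Y] {ν : Measure Y}
    {m n : Y → Measure B} (hm : ∀ᵐ y ∂ν, IsProbabilityMeasure (m y))
    (hn : ∀ᵐ y ∂ν, IsProbabilityMeasure (n y))
    (h : ∀ E, MeasurableSet E → ∀ᵐ y ∂ν, m y E = n y E) : ∀ᵐ y ∂ν, m y = n y := by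
  let C := generateSetAlgebra (MeasurableSpace.countableGeneratingSet B)
  have hgen : ‹MeasurableSpace B› = MeasurableSpace.generateFrom C := by
    rw [generateFrom_generateSetAlgebra_eq]
    exact MeasurableSpace.generateFrom_countableGeneratingSet.symm
  have hC : C.Countable :=
    countable_generateSetAlgebra MeasurableSpace.countable_countableGeneratingSet
  have hpi : IsPiSystem C := fun _ hs _ ht _ => isSetAlgebra_generateSetAlgebra.inter_mem hs ht
  have hall : ∀ᵐ y ∂ν, ∀ E ∈ C, m y E = n y E := (ae_ball_iff hC).2 fun E hE =>
    h E (hgen.ge E (MeasurableSpace.measurableSet_generateFrom hE))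
  filter_upwards [hm, hn, hall] with y _ _ hy
  exact ext_of_generate_finite C hgen hpi hy (by simp only [measure_univ])

variable {A B : Type*} [MeasurableSpace A] [MeasurableSpace B]
  [MeasurableSpace.CountablyGenerated B]

lemma isCondBar_revCompProd_iff {ν : Measure (A × Measure B)} [IsFiniteMeasure ν]
    {κ : Kernel (A × Measure B) (A × Measure B)} [IsMarkovKernel κ]
    (hκ : ∀ᵐ y ∂ν, ∀ᵐ x ∂κ y, IsProbabilityMeasure x.2) {g : A × Measure B → Measure B}
    (hg : Measurable g) (hgp : ∀ y, IsProbabilityMeasure (g y)) :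
    IsCondBar (revCompProd ν κ) (fun z => g z.2) ↔ ∀ᵐ y ∂ν, g y = (κ y).bind Prod.snd := by
  have hgE {E : Set B} (hE : MeasurableSet E) : Measurable fun y => g y E :=
    (Measure.measurable_coe hE).comp hg
  have hxE {E : Set B} (hE : MeasurableSet E) : Measurable fun x : A × Measure B => x.2 E :=
    (Measure.measurable_coe hE).comp measurable_snd
  have hleft {S : Set (A × Measure B)} (hS : MeasurableSet S) {E : Set B} (hE : MeasurableSet E) :
      ∫⁻ z in {z | z.2 ∈ S}, g z.2 E ∂revCompProd ν κ = ∫⁻ y in S, g y E ∂ν := by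
    rw [setLIntegral_revCompProd ν κ hS (f := fun z => g z.2 E) (by fun_prop)]
    simp only [lintegral_const, measure_univ, mul_one]
  have hright {S : Set (A × Measure B)} (hS : MeasurableSet S) {E : Set B}
      (hE : MeasurableSet E) : ∫⁻ z in {z | z.2 ∈ S}, z.1.2 E ∂revCompProd ν κ =
        ∫⁻ y in S, (κ y).bind Prod.snd E ∂ν := by
    rw [setLIntegral_revCompProd ν κ hS (f := fun z => z.1.2 E) (by fun_prop)]
    simp only [Measure.bind_apply hE measurable_snd.aemeasurable]
  constructor
  · refine fun h => ae_eq_measure_of_forall_ae_eq (.of_forall hgp)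
      (hκ.mono fun y hy => isProbabilityMeasure_bind measurable_snd.aemeasurable hy) fun E hE => ?_
    have hbE : Measurable fun y => (κ y).bind Prod.snd E := by
      simp only [Measure.bind_apply hE measurable_snd.aemeasurable]
      exact (hxE hE).lintegral_kernel
    exact ae_eq_of_forall_setLIntegral_eq_of_sigmaFinite (hgE hE) hbE fun S hS _ => by
      rw [← hleft hS hE, h.2.2 S hS E hE, hright hS hE]
  · refine fun h => ⟨⟨g, hg, fun _ => rfl⟩, fun z => hgp z.2, fun S hS E hE => ?_⟩
    rw [hleft hS hE, hright hS hE]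
    exact lintegral_congr_ae (ae_restrict_of_ae (h.mono fun y hy => congrArg (· E) hy))

end ConditionalBarycenter

section ConditionalBarycenterComp

variable {A B : Type*} [MeasurableSpace A] [MeasurableSpace B]

lemma bind_eq_bind_snd_of_ae_eq {T : Type*} [MeasurableSpace T] {ν : Measure T}
    {κ : Kernel T (A × Measure B)} {g : T → Measure B}
    (hg : ∀ᵐ y ∂ν, g y = (κ y).bind Prod.snd) : ν.bind g = (ν.bind κ).bind Prod.snd :=
  (Measure.bind_congr_right hg).trans
    (Measure.bind_bind κ.aemeasurable measurable_snd.aemeasurable).symm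

lemma isCondBar_revCompProd_comp [MeasurableSpace.CountablyGenerated B]
    {lam : Measure (A × Measure B)} [IsFiniteMeasure lam]
    {κ κ' : Kernel (A × Measure B) (A × Measure B)} [IsMarkovKernel κ] [IsMarkovKernel κ']
    (hκ : ∀ᵐ x ∂(lam.bind κ').bind κ, IsProbabilityMeasure x.2)
    {g : A × Measure B → Measure B} (hgm : Measurable g) (hgp : ∀ y, IsProbabilityMeasure (g y))
    (hg : ∀ᵐ y ∂lam.bind κ', g y = (κ y).bind Prod.snd) :
    IsCondBar (revCompProd lam (κ ∘ₖ κ')) (fun z => (κ' z.2).bind g) := by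
  have hcomp (z : A × Measure B) : (κ ∘ₖ κ') z = (κ' z).bind κ := Kernel.comp_apply κ κ' z
  rw [Measure.bind_bind κ'.aemeasurable κ.aemeasurable] at hκ
  have hbm : Measurable fun z => (κ' z).bind g :=
    (Measure.measurable_bind' hgm).comp κ'.measurable
  refine (isCondBar_revCompProd_iff ?_ hbm
    fun z => isProbabilityMeasure_bind hgm.aemeasurable (.of_forall hgp)).2 ?_
  · simpa only [hcomp] using Measure.ae_ae_of_ae_bind (by fun_prop) hκ
  · filter_upwards [Measure.ae_ae_of_ae_bind κ'.aemeasurable hg] with z hz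
    rw [hcomp, bind_eq_bind_snd_of_ae_eq hz]

end ConditionalBarycenterComp

section Cost

variable {A B : Type*} [MeasurableSpace A]

lemma MemPpLift.memPp_bind_snd [PseudoMetricSpace B] [SecondCountableTopology B]
    [MeasurableSpace B] [OpensMeasurableSpace B] {p : ℝ} (hp : 1 ≤ p)
    {dA : A → A → ℝ≥0∞} {μ : Measure (A × Measure B)} (hμ : MemPpLift p dA edist μ) :
    MemPp p edist (μ.bind Prod.snd) := by
  have hp0 : 0 < p := by linarith
  obtain ⟨_, hprob, z₀, ⟨_, x₀, hx₀⟩, hfin⟩ := hμ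
  refine ⟨isProbabilityMeasure_bind measurable_snd.aemeasurable (hprob.mono fun z hz => hz.1), x₀,
    ?_⟩
  have hmoment (z : A × Measure B) : ∫⁻ x, edist x₀ x ^ p ∂z.2 ≤
      2 ^ (p - 1) * (∫⁻ x, edist x₀ x ^ p ∂z₀.2 + liftDist p dA edist z₀ z ^ p) := by
    have h := ENNReal.rpow_le_rpow (rpow_moment_le_add_Wp hp x₀ z₀.2 z.2) hp0.le
    have h' := h.trans (ENNReal.rpow_add_le_mul_rpow_add_rpow _ _ hp)
    simp only [← ENNReal.rpow_mul, one_div_mul_cancel hp0.ne', ENNReal.rpow_one] at h'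
    simp only [liftDist, ← ENNReal.rpow_mul, one_div_mul_cancel hp0.ne', ENNReal.rpow_one]
    exact h'.trans (by gcongr; exact le_add_self)
  have h2 : (2 : ℝ≥0∞) ^ (p - 1) ≠ ∞ :=
    ENNReal.rpow_ne_top_of_nonneg (by linarith) ENNReal.ofNat_ne_top
  rw [Measure.lintegral_bind measurable_snd.aemeasurable (by fun_prop)]
  refine ne_top_of_le_ne_top ?_ (lintegral_mono hmoment)
  rw [lintegral_const_mul' _ _ h2, lintegral_add_left measurable_const, lintegral_const,
    measure_univ, mul_one]
  exact ENNReal.mul_ne_top h2 (ENNReal.add_ne_top.2 ⟨hx₀, hfin⟩)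

/-- The `L^p` cost of transporting the first components of the two marginals of `γ`. -/
def spatialCost [PseudoEMetricSpace A] [MeasurableSpace B] (p : ℝ)
    (γ : Measure ((A × Measure B) × (A × Measure B))) : ℝ≥0∞ :=
  (∫⁻ z, edist z.1.1 z.2.1 ^ p ∂γ) ^ (1 / p)

/-- The `L^p` Wasserstein distance under `ν` between the barycenters `g y` and the second
components `y.2`. -/
def barycenterCost [PseudoEMetricSpace B] [MeasurableSpace B] (p : ℝ) (ν : Measure (A × Measure B))
    (g : A × Measure B → Measure B) : ℝ≥0∞ :=
  (∫⁻ y, Wp p edist (g y) y.2 ^ p ∂ν) ^ (1 / p)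

lemma rpow_add_rpow_le_add {p : ℝ} (hp : 1 ≤ p) {a a₁ a₂ b b₁ b₂ : ℝ≥0∞} (ha : a ≤ a₁ + a₂)
    (hb : b ≤ b₁ + b₂) :
    (a ^ p + b ^ p) ^ (1 / p) ≤ (a₁ ^ p + b₁ ^ p) ^ (1 / p) + (a₂ ^ p + b₂ ^ p) ^ (1 / p) := by
  have : 0 ≤ p := by linarith
  calc (a ^ p + b ^ p) ^ (1 / p)
      ≤ ((a₁ + a₂) ^ p + (b₁ + b₂) ^ p) ^ (1 / p) := by gcongr
    _ ≤ _ := by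
        simpa only [Fin.sum_univ_two, Matrix.cons_val_zero, Matrix.cons_val_one] using
          ENNReal.Lp_add_le Finset.univ ![a₁, b₁] ![a₂, b₂] hp

lemma lintegral_cost_eq [PseudoEMetricSpace A] [SecondCountableTopology A] [OpensMeasurableSpace A]
    [PseudoEMetricSpace B] [MeasurableSpace B] {p : ℝ} (hp : 0 < p) {μ ν : Measure (A × Measure B)}
    {γ : Measure ((A × Measure B) × (A × Measure B))} (hγ : γ ∈ Cpl μ ν)
    {g : A × Measure B → Measure B} (hg : AEMeasurable (fun y => Wp p edist (g y) y.2) ν) :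
    ∫⁻ z, (edist z.1.1 z.2.1 ^ p + Wp p edist (g z.2) z.2.2 ^ p) ∂γ =
      spatialCost p γ ^ p + barycenterCost p ν g ^ p := by
  rw [lintegral_add_left (by fun_prop)]
  simp only [spatialCost, barycenterCost, ← ENNReal.rpow_mul, one_div_mul_cancel hp.ne',
    ENNReal.rpow_one]
  obtain ⟨-, rfl⟩ := hγ
  rw [lintegral_map' (hg.pow_const p) measurable_snd.aemeasurable]

lemma spatialCost_revCompProd_comp_le [PseudoEMetricSpace A] [SecondCountableTopology A]
    [OpensMeasurableSpace A] [MeasurableSpace B] {p : ℝ} (hp : 1 ≤ p)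
    (ν : Measure (A × Measure B)) [SFinite ν] (κ η : Kernel (A × Measure B) (A × Measure B))
    [IsMarkovKernel κ] [IsMarkovKernel η] :
    spatialCost p (revCompProd ν (η ∘ₖ κ)) ≤
      spatialCost p (revCompProd (ν.bind κ) η) + spatialCost p (revCompProd ν κ) := by
  obtain ⟨θ, h₁₃, h₁₂, h₂₃⟩ := exists_gluing_revCompProd ν κ η
  simp_rw [spatialCost, ← h₁₃, ← h₁₂, ← h₂₃]
  rw [lintegral_map (by fun_prop) (by fun_prop), lintegral_map (by fun_prop) (by fun_prop),
    lintegral_map (by fun_prop) (by fun_prop)]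
  exact lintegral_rpow_le_add hp (by fun_prop) (by fun_prop)
    (.of_forall fun t => edist_triangle _ _ _)

end Cost

section Contraction

variable {B : Type*} [PseudoMetricSpace B] [SecondCountableTopology B] [MeasurableSpace B]
  [OpensMeasurableSpace B] [StandardBorelSpace B] {p : ℝ}

lemma lintegral_Wp_bind_rpow_le {S T : Type*} [MeasurableSpace S] [MeasurableSpace T]
    (hp : 1 ≤ p) {lam : Measure S} {κ : Kernel S T} [IsMarkovKernel κ] {m n : T → Measure B}
    (hm : Measurable m) (hn : Measurable n)
    (hmp : ∀ᵐ y ∂lam.bind κ, IsProbabilityMeasure (m y))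
    (hnp : ∀ᵐ y ∂lam.bind κ, IsProbabilityMeasure (n y))
    (hmb : MemPp p edist ((lam.bind κ).bind m)) (hnb : MemPp p edist ((lam.bind κ).bind n)) :
    ∫⁻ z, Wp p edist ((κ z).bind m) ((κ z).bind n) ^ p ∂lam ≤
      ∫⁻ y, Wp p edist (m y) (n y) ^ p ∂lam.bind κ := by
  have hp0 : 0 < p := by linarith
  have : Nonempty B := ⟨hmb.2.choose⟩
  have hW := aemeasurable_Wp hp hm hn (MemPp.ae_of_bind hm hmp hmb) (MemPp.ae_of_bind hn hnp hnb)
  rw [Measure.lintegral_bind κ.aemeasurable (hW.pow_const p)]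
  have hmem {m : T → Measure B} (hm : Measurable m)
      (hmp : ∀ᵐ y ∂lam.bind κ, IsProbabilityMeasure (m y))
      (hmb : MemPp p edist ((lam.bind κ).bind m)) :
      ∀ᵐ z ∂lam, (∀ᵐ y ∂κ z, IsProbabilityMeasure (m y)) ∧ MemPp p edist ((κ z).bind m) := by
    have hae := Measure.ae_ae_of_ae_bind κ.aemeasurable hmp
    rw [Measure.bind_bind κ.aemeasurable hm.aemeasurable] at hmb
    refine hae.and (MemPp.ae_of_bind ((Measure.measurable_bind' hm).comp κ.measurable) ?_ hmb)
    exact hae.mono fun z hz => isProbabilityMeasure_bind hm.aemeasurable hz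
  refine lintegral_mono_ae ?_
  filter_upwards [hmem hm hmp hmb, hmem hn hnp hnb] with z ⟨hmz, hmbz⟩ ⟨hnz, hnbz⟩
  rw [← ENNReal.le_rpow_inv_iff hp0, ← one_div]
  exact Wp_bind_le hp hm hn hmz hnz hmbz hnbz

lemma barycenterCost_bind_le {A : Type*} [MeasurableSpace A] (hp : 1 ≤ p)
    {lam : Measure (A × Measure B)} {κ : Kernel (A × Measure B) (A × Measure B)} [IsMarkovKernel κ]
    {g g' : A × Measure B → Measure B} (hg : Measurable g) (hg' : Measurable g')
    (hgp : ∀ y, IsProbabilityMeasure (g y)) (hgp' : ∀ y, IsProbabilityMeasure (g' y))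
    (hκ : ∀ᵐ y ∂lam.bind κ, IsProbabilityMeasure y.2)
    (hlam : ∀ᵐ z ∂lam, IsProbabilityMeasure z.2)
    (hbar : ∀ᵐ z ∂lam, g' z = (κ z).bind Prod.snd)
    (hgb : MemPp p edist ((lam.bind κ).bind g))
    (hκb : MemPp p edist ((lam.bind κ).bind Prod.snd)) (hlamb : MemPp p edist (lam.bind Prod.snd)) :
    barycenterCost p lam (fun z => (κ z).bind g) ≤
      barycenterCost p (lam.bind κ) g + barycenterCost p lam g' := by
  have : Nonempty B := ⟨hgb.2.choose⟩
  have hbm : Measurable fun z => (κ z).bind g := (Measure.measurable_bind' hg).comp κ.measurable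
  have hbp (z : A × Measure B) : IsProbabilityMeasure ((κ z).bind g) :=
    isProbabilityMeasure_bind hg.aemeasurable (.of_forall hgp)
  have hb : ∀ᵐ z ∂lam, MemPp p edist ((κ z).bind g) := by
    rw [Measure.bind_bind κ.aemeasurable hg.aemeasurable] at hgb
    exact MemPp.ae_of_bind hbm (.of_forall hbp) hgb
  have hb' : ∀ᵐ z ∂lam, MemPp p edist (g' z) :=
    MemPp.ae_of_bind hg' (.of_forall hgp') (bind_eq_bind_snd_of_ae_eq hbar ▸ hκb)
  have hlam' := MemPp.ae_of_bind measurable_snd hlam hlamb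
  have htri : ∀ᵐ z ∂lam, Wp p edist ((κ z).bind g) z.2 ≤
      Wp p edist ((κ z).bind g) (g' z) + Wp p edist (g' z) z.2 :=
    .of_forall fun z => Wp_triangle hp _ (g' z) z.2
  refine (lintegral_rpow_le_add hp (aemeasurable_Wp hp hbm hg' hb hb')
    (aemeasurable_Wp hp hg' measurable_snd hb' hlam') htri).trans (add_le_add_left ?_ _)
  refine ENNReal.rpow_le_rpow ?_ (by positivity)
  calc ∫⁻ z, Wp p edist ((κ z).bind g) (g' z) ^ p ∂lam
      = ∫⁻ z, Wp p edist ((κ z).bind g) ((κ z).bind Prod.snd) ^ p ∂lam :=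
        lintegral_congr_ae (hbar.mono fun z hz => by simp only [hz])
    _ ≤ _ := lintegral_Wp_bind_rpow_le hp hg measurable_snd (.of_forall hgp) hκ hgb hκb

end Contraction

section Triangle

lemma MemPpLift.ae_isProbabilityMeasure_snd {A B : Type*} [MeasurableSpace A] [MeasurableSpace B]
    {p : ℝ} {dA : A → A → ℝ≥0∞} {dB : B → B → ℝ≥0∞} {μ : Measure (A × Measure B)}
    (hμ : MemPpLift p dA dB μ) : ∀ᵐ x ∂μ, IsProbabilityMeasure x.2 :=
  hμ.2.1.mono fun _ hx => hx.1

variable {A B : Type*} [PseudoEMetricSpace A] [SecondCountableTopology A] [MeasurableSpace A]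
  [OpensMeasurableSpace A] [PseudoMetricSpace B] [SecondCountableTopology B] [MeasurableSpace B]
  [OpensMeasurableSpace B] [StandardBorelSpace B] {p : ℝ}

lemma lintegral_cost_revCompProd_eq (hp : 1 ≤ p) {dA : A → A → ℝ≥0∞} {ν : Measure (A × Measure B)}
    (hν : MemPpLift p dA edist ν) {κ : Kernel (A × Measure B) (A × Measure B)} [IsMarkovKernel κ]
    {g : A × Measure B → Measure B} (hg : Measurable g) (hgp : ∀ y, IsProbabilityMeasure (g y))
    (hgb : MemPp p edist (ν.bind g)) :
    ∫⁻ z, (edist z.1.1 z.2.1 ^ p + Wp p edist (g z.2) z.2.2 ^ p) ∂revCompProd ν κ =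
      spatialCost p (revCompProd ν κ) ^ p + barycenterCost p ν g ^ p := by
  have := hν.1
  have : Nonempty B := ⟨hgb.2.choose⟩
  exact lintegral_cost_eq (by linarith) (revCompProd_mem_Cpl ν κ)
    (aemeasurable_Wp hp hg measurable_snd (MemPp.ae_of_bind hg (.of_forall hgp) hgb) hν.2.1)

lemma lintegral_cost_revCompProd_comp_le (hp : 1 ≤ p) {lam : Measure (A × Measure B)}
    {κ κ' : Kernel (A × Measure B) (A × Measure B)} [IsMarkovKernel κ] [IsMarkovKernel κ']
    (hlam : MemPpLift p edist edist lam) (hν : MemPpLift p edist edist (lam.bind κ'))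
    (hμ : MemPpLift p edist edist ((lam.bind κ').bind κ)) {g g' : A × Measure B → Measure B}
    (hg : Measurable g) (hg' : Measurable g') (hgp : ∀ y, IsProbabilityMeasure (g y))
    (hgp' : ∀ y, IsProbabilityMeasure (g' y))
    (hbar : ∀ᵐ y ∂lam.bind κ', g y = (κ y).bind Prod.snd)
    (hbar' : ∀ᵐ z ∂lam, g' z = (κ' z).bind Prod.snd) :
    (∫⁻ z, (edist z.1.1 z.2.1 ^ p + Wp p edist ((κ' z.2).bind g) z.2.2 ^ p)
        ∂revCompProd lam (κ ∘ₖ κ')) ^ (1 / p) ≤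
      (∫⁻ z, (edist z.1.1 z.2.1 ^ p + Wp p edist (g z.2) z.2.2 ^ p)
        ∂revCompProd (lam.bind κ') κ) ^ (1 / p) +
      (∫⁻ z, (edist z.1.1 z.2.1 ^ p + Wp p edist (g' z.2) z.2.2 ^ p)
        ∂revCompProd lam κ') ^ (1 / p) := by
  have := hlam.1
  have hgb : MemPp p edist ((lam.bind κ').bind g) :=
    bind_eq_bind_snd_of_ae_eq hbar ▸ hμ.memPp_bind_snd hp
  have hgb' : MemPp p edist (lam.bind g') :=
    bind_eq_bind_snd_of_ae_eq hbar' ▸ hν.memPp_bind_snd hp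
  have hcomp : MemPp p edist (lam.bind fun z => (κ' z).bind g) :=
    Measure.bind_bind κ'.aemeasurable hg.aemeasurable ▸ hgb
  have hbm : Measurable fun z => (κ' z).bind g := (Measure.measurable_bind' hg).comp κ'.measurable
  rw [lintegral_cost_revCompProd_eq hp hν hg hgp hgb,
    lintegral_cost_revCompProd_eq hp hlam hg' hgp' hgb',
    lintegral_cost_revCompProd_eq hp hlam hbm
      (fun z => isProbabilityMeasure_bind hg.aemeasurable (.of_forall hgp)) hcomp]
  exact rpow_add_rpow_le_add hp (spatialCost_revCompProd_comp_le hp lam κ' κ)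
    (barycenterCost_bind_le hp hg hg' hgp hgp' hν.ae_isProbabilityMeasure_snd
      hlam.ae_isProbabilityMeasure_snd hbar' hgb (hν.memPp_bind_snd hp) (hlam.memPp_bind_snd hp))

lemma CWbar_bind_bind_le (hp : 1 ≤ p) {lam : Measure (A × Measure B)}
    {κ κ' : Kernel (A × Measure B) (A × Measure B)} [IsMarkovKernel κ] [IsMarkovKernel κ']
    (hlam : MemPpLift p edist edist lam) (hν : MemPpLift p edist edist (lam.bind κ'))
    (hμ : MemPpLift p edist edist ((lam.bind κ').bind κ)) {g g' : A × Measure B → Measure B}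
    (hg : Measurable g) (hg' : Measurable g')
    (hc : IsCondBar (revCompProd (lam.bind κ') κ) fun z => g z.2)
    (hc' : IsCondBar (revCompProd lam κ') fun z => g' z.2) :
    CWbar p edist edist ((lam.bind κ').bind κ) lam ≤
      (∫⁻ z, (edist z.1.1 z.2.1 ^ p + Wp p edist (g z.2) z.2.2 ^ p)
        ∂revCompProd (lam.bind κ') κ) ^ (1 / p) +
      (∫⁻ z, (edist z.1.1 z.2.1 ^ p + Wp p edist (g' z.2) z.2.2 ^ p)
        ∂revCompProd lam κ') ^ (1 / p) := by
  have := hlam.1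
  have hprob := hν.ae_isProbabilityMeasure_snd
  have hprob' := hμ.ae_isProbabilityMeasure_snd
  have hgp (y : A × Measure B) : IsProbabilityMeasure (g y) := hc.2.1 (y, y)
  have hgp' (y : A × Measure B) : IsProbabilityMeasure (g' y) := hc'.2.1 (y, y)
  have hbar : ∀ᵐ y ∂lam.bind κ', g y = (κ y).bind Prod.snd :=
    (isCondBar_revCompProd_iff (Measure.ae_ae_of_ae_bind (by fun_prop) hprob') hg hgp).1 hc
  have hbar' : ∀ᵐ z ∂lam, g' z = (κ' z).bind Prod.snd :=
    (isCondBar_revCompProd_iff (Measure.ae_ae_of_ae_bind (by fun_prop) hprob) hg' hgp').1 hc'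
  have hcpl : revCompProd lam (κ ∘ₖ κ') ∈ Cpl ((lam.bind κ').bind κ) lam :=
    Measure.comp_assoc (μ := lam) (κ := κ') (η := κ) ▸ revCompProd_mem_Cpl lam (κ ∘ₖ κ')
  exact (iInf₂_le_of_le _ hcpl (iInf₂_le _ (isCondBar_revCompProd_comp hprob' hg hgp hbar))).trans
    (lintegral_cost_revCompProd_comp_le hp hlam hν hμ hg hg' hgp hgp' hbar hbar')

end Triangle

theorem CWbar_triangle_general {A B : Type*} [PseudoEMetricSpace A] [SecondCountableTopology A]
    [MeasurableSpace A] [OpensMeasurableSpace A] [StandardBorelSpace A] [PseudoMetricSpace B]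
    [SecondCountableTopology B] [MeasurableSpace B] [OpensMeasurableSpace B] [StandardBorelSpace B]
    {p : ℝ} (hp : 1 ≤ p) {μ ν lam : Measure (A × Measure B)} (hμ : MemPpLift p edist edist μ)
    (hν : MemPpLift p edist edist ν) (hlam : MemPpLift p edist edist lam) :
    CWbar p edist edist μ lam ≤ CWbar p edist edist μ ν + CWbar p edist edist ν lam := by
  have := hμ.1
  have := hν.1
  obtain ⟨z₀, ⟨-, x₀, -⟩, -⟩ := hμ.2.2
  have : Nonempty A := ⟨z₀.1⟩
  have : Nonempty B := ⟨x₀⟩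
  simp_rw [CWbar, ENNReal.iInf_add, ENNReal.add_iInf]
  refine le_iInf₂ fun γ hγ => le_iInf₂ fun η hη => le_iInf₂ fun γ' hγ' => le_iInf₂ fun θ hθ => ?_
  obtain ⟨κ, _, rfl, rfl⟩ := exists_revCompProd_eq hμ.ae_isProbabilityMeasure_snd hγ
  obtain ⟨κ', _, rfl, rfl⟩ := exists_revCompProd_eq hν.ae_isProbabilityMeasure_snd hγ'
  obtain ⟨g, hg, hgη⟩ := hη.1
  obtain ⟨g', hg', hgθ⟩ := hθ.1
  obtain rfl : η = fun z => g z.2 := funext hgη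
  obtain rfl : θ = fun z => g' z.2 := funext hgθ
  exact CWbar_bind_bind_le hp hlam hν hμ hg hg' hη hθ

/-- **Lemma 4.6 (triangle inequality).**  `CW̄_p(μ, λ) ≤ CW̄_p(μ, ν) + CW̄_p(ν, λ)`
on `𝒫_p(𝒳₁ × 𝒫_p(𝒳₂))`. -/
theorem CWbar_triangle
    {X1 X2 : Type} [MetricSpace X1] [CompleteSpace X1] [SecondCountableTopology X1]
    [MeasurableSpace X1] [BorelSpace X1] [Nonempty X1]
    [MetricSpace X2] [CompleteSpace X2] [SecondCountableTopology X2]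
    [MeasurableSpace X2] [BorelSpace X2] [Nonempty X2]
    (p : ℝ) (hp : 1 ≤ p)
    (μ ν lam : Measure (X1 × Measure X2))
    (hμ : MemPpLift p (edist : X1 → X1 → ℝ≥0∞) (edist : X2 → X2 → ℝ≥0∞) μ)
    (hν : MemPpLift p (edist : X1 → X1 → ℝ≥0∞) (edist : X2 → X2 → ℝ≥0∞) ν)
    (hlam : MemPpLift p (edist : X1 → X1 → ℝ≥0∞) (edist : X2 → X2 → ℝ≥0∞) lam) :
    CWbar p (edist : X1 → X1 → ℝ≥0∞) (edist : X2 → X2 → ℝ≥0∞) μ lam ≤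
      CWbar p edist edist μ ν + CWbar p edist edist ν lam :=
  CWbar_triangle_general hp hμ hν hlam

end AWPaper
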